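/- arXiv:1907.01373 — 3 statements merged into one kernel-verified Lean document; each statement's English description precedes it below -/
import Mathlib

section
/- Let 0<s<1 and 1≤p<∞ satisfy sp ≥ 1, and let m ≥ 1. Let (Ñ, d_Ñ) and (N, d_N) be metric spaces with Ñ connected, and let π : Ñ → N be a topological covering map which is nonexpansive and an isometry at scale ρ>0 (i.e. d_N(π(a),π(b)) ≤ d_Ñ(a,b) for all a,b, with equality whenever d_Ñ(a,b) ≤ ρ). Assume that some fiber π^{-1}({y₀}) is at most countable, that every deck transformation (homeomorphism τ : Ñ → Ñ with π ∘ τ = π) is an isometry of Ñ, and that the covering is normal: for all a, b ∈ Ñ with π(a) = π(b) there is a deck transformation τ with τ(a) = b. Let Ω ⊆ ℝ^m be a connected open set and let ũ, ṽ : Ω → Ñ be Borel measurable maps in W^{s,p}_loc(Ω, Ñ) with π ∘ ũ = π ∘ ṽ almost everywhere on Ω. Then there exists a deck transformation τ such that ṽ = τ ∘ ũ almost everywhere on Ω. -/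
/-!
In the fibered product `{(a, b) | π a = π b}`, the graph of a deck transformation lies at positive
distance from its complement, because deck transformations are isometries and distinct points of
a fiber are more than `ρ` apart. A measurable map on `ℝ^m` has separable range, so `(ũ, ṽ)` lies
on one such graph with positive measure, and it remains to see that `(ũ, ṽ)`, which is again
`W^{s,p}_loc`, cannot jump between two separated sets `S` and `T` of values.

If it did so on a ball, the two preimages `P` and `Q` would satisfy `∫_P ∫_Q |x - y|^{-q} < ∞`,
where `q = m + sp ≥ m + 1`. This integral is `∫ Ψ(h) |h|^{-q}` with `Ψ(h) = |P ∩ (Q - h)|`, and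
looking at midpoints gives `Ψ(2h) ≤ 2 Ψ(h)`. Hence the integral over the ball of radius `2r` is at
most the integral over the ball of radius `r`; letting `r → 0`, it vanishes, and so does
`∫ Ψ = |P| |Q|`. Connectedness of `Ω` makes this local dichotomy global.
-/

open MeasureTheory Set ENNReal

/-- The Gagliardo `W^{s,p}` double integral of a map `w : ℝ^m → X` on a set `A`. -/
noncomputable def gagliardoIntegral {m : ℕ} {X : Type*} [PseudoEMetricSpace X] (s p : ℝ)
    (A : Set (EuclideanSpace ℝ (Fin m))) (w : EuclideanSpace ℝ (Fin m) → X) : ℝ≥0∞ :=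
  ∫⁻ x in A, ∫⁻ y in A, edist (w x) (w y) ^ p / edist x y ^ ((m : ℝ) + s * p)

/-- `w ∈ W^{s,p}_loc(Ω, X)`: every point of `Ω` has an open neighborhood in `Ω` on which the
Gagliardo double integral is finite. -/
def MemWsplocOn {m : ℕ} {X : Type*} [PseudoEMetricSpace X] (s p : ℝ)
    (Ω : Set (EuclideanSpace ℝ (Fin m))) (w : EuclideanSpace ℝ (Fin m) → X) : Prop :=
  ∀ x ∈ Ω, ∃ U : Set (EuclideanSpace ℝ (Fin m)),
    IsOpen U ∧ x ∈ U ∧ U ⊆ Ω ∧ gagliardoIntegral s p U w < ∞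

open Cardinal Filter Metric Module TopologicalSpace
open scoped NNReal Topology

section StandardBorel

variable {α β : Type*} [MeasurableSpace α] [StandardBorelSpace α]

theorem countable_of_forall_subset_measurableSet {s : Set α}
    (hs : ∀ t ⊆ s, MeasurableSet t) : s.Countable := by
  by_contra hcount
  have : StandardBorelSpace s := (hs s subset_rfl).standardBorel
  let e : s ≃ᵐ ℝ := PolishSpace.measurableEquivOfNotCountable hcount
    fun h ↦ not_countable_real (to_countable _)
  have hreal (t : Set ℝ) : MeasurableSet t := by
    have himage : MeasurableSet (Subtype.val '' (e ⁻¹' t)) := hs _ (Subtype.coe_image_subset _ _)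
    rw [← e.measurableSet_preimage, ← preimage_image_eq (e ⁻¹' t) Subtype.val_injective]
    exact measurable_subtype_coe himage
  obtain ⟨b, hb, hgen⟩ := (inferInstance : MeasurableSpace.CountablyGenerated ℝ)
  have hcard := MeasurableSpace.cardinal_measurableSet_le_continuum (s := b)
    (hb.le_aleph0.trans aleph0_le_continuum)
  rw [← hgen, eq_univ_of_forall hreal (s := {t | MeasurableSet t}), mk_univ, mk_set, mk_real]
    at hcard
  exact (cantor 𝔠).not_ge hcard

-- The image of a section of `f` is the fixed-point set of a measurable map, and each of its
-- subsets is its trace on a union of fibers of `f`.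
theorem countable_range_of_measurable_discrete [MeasurableSpace β] [DiscreteMeasurableSpace β]
    {f : α → β} (hf : Measurable f) : (range f).Countable := by
  rcases isEmpty_or_nonempty α with _ | _
  · exact to_countable _
  let := upgradeStandardBorel α
  let g : α → α := Function.invFun f ∘ f
  have hg : Measurable g := Measurable.of_discrete.comp hf
  have hfg (x : α) : f (g x) = f x := Function.invFun_eq ⟨x, rfl⟩
  have hcount : {x | g x = x}.Countable := countable_of_forall_subset_measurableSet fun t ht ↦ by
    have htrace : t = {x | g x = x} ∩ f ⁻¹' (f '' t) := by
      refine Subset.antisymm (subset_inter ht (subset_preimage_image f t)) ?_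
      rintro x ⟨hx, y, hy, hyx⟩
      have hxy : g x = g y := congrArg (Function.invFun f) hyx.symm
      rwa [← hx.symm.trans (hxy.trans (ht hy))] at hy
    rw [htrace]
    exact (measurableSet_eq_fun hg measurable_id).inter (hf (.of_discrete))
  refine (hcount.image f).mono ?_
  rintro _ ⟨x, rfl⟩
  exact ⟨g x, congrArg (Function.invFun f) (hfg x), hfg x⟩

theorem exists_isSeparated_isCover {X : Type*} [PseudoEMetricSpace X] (ε : ℝ≥0) (s : Set X) :
    ∃ t ⊆ s, IsSeparated ε t ∧ IsCover ε s t := by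
  obtain ⟨t, ht⟩ := zorn_subset {t | t ⊆ s ∧ IsSeparated ε t} fun c hc hchain ↦
    ⟨⋃₀ c, ⟨sUnion_subset fun t ht ↦ (hc ht).1,
      (pairwise_sUnion hchain.directedOn).2 fun t ht ↦ (hc ht).2⟩, fun _ ↦ subset_sUnion_of_mem⟩
  exact ⟨t, ht.prop.1, ht.prop.2, .of_maximal_isSeparated ht⟩

theorem isClosed_of_isSeparated {X : Type*} [EMetricSpace X] {ε : ℝ≥0∞} (hε : 0 < ε) {s : Set X}
    (hs : IsSeparated ε s) : IsClosed s :=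
  isClosed_of_spaced_out (edist_mem_uniformity hε) fun _ hx _ hy hxy ↦
    (hs hx hy hxy).not_gt

variable {X : Type*} [EMetricSpace X] [MeasurableSpace X] [BorelSpace X] {f : α → X}

theorem countable_of_isSeparated_of_subset_range (hf : Measurable f) {ε : ℝ≥0∞} (hε : 0 < ε)
    {s : Set X} (hs : IsSeparated ε s) (hsf : s ⊆ range f) : s.Countable := by
  have hmeas {t : Set X} (ht : t ⊆ s) : MeasurableSet (f ⁻¹' t) :=
    hf (isClosed_of_isSeparated hε (hs.subset ht)).measurableSet
  have : StandardBorelSpace (f ⁻¹' s) := (hmeas subset_rfl).standardBorel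
  let : MeasurableSpace s := ⊤
  let g : f ⁻¹' s → s := s.restrictPreimage f
  have hg : Measurable g := fun t _ ↦ by
    rw [← preimage_image_eq t Subtype.val_injective]
    exact measurable_subtype_coe (hmeas (Subtype.coe_image_subset s t))
  have hsurj : Function.Surjective g := by
    rintro ⟨_, hy⟩
    obtain ⟨x, rfl⟩ := hsf hy
    exact ⟨⟨x, hy⟩, rfl⟩
  exact countable_univ_iff.1 (hsurj.range_eq ▸ countable_range_of_measurable_discrete hg)

theorem isSeparable_range_of_measurable (hf : Measurable f) : IsSeparable (range f) := by
  obtain ⟨t, -, ht, hcover⟩ := EMetric.subset_countable_closure_of_almost_dense_set (range f)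
    fun ε hε ↦ by
      obtain ⟨δ, hδ, hδε⟩ := ENNReal.lt_iff_exists_nnreal_btwn.1 hε
      obtain ⟨s, hsf, hsep, hcover⟩ := exists_isSeparated_isCover δ (range f)
      refine ⟨s, countable_of_isSeparated_of_subset_range hf hδ hsep hsf,
        (isCover_iff_subset_iUnion_closedEBall.1 hcover).trans <|
          iUnion₂_mono fun x _ ↦ closedEBall_subset_closedEBall hδε.le⟩
  exact ⟨t, ht, hcover⟩

theorem stronglyMeasurable_of_standardBorelSpace (hf : Measurable f) : StronglyMeasurable f :=
  stronglyMeasurable_iff_measurable_separable.2 ⟨hf, isSeparable_range_of_measurable hf⟩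

end StandardBorel

theorem measure_compl_singleton_of_ball_two_mul_le {X : Type*} [MetricSpace X] [MeasurableSpace X]
    [OpensMeasurableSpace X] (ν : Measure X) [IsFiniteMeasure ν] (x : X)
    (hν : ∀ r > 0, ν (ball x (2 * r)) ≤ ν (ball x r)) : ν {x}ᶜ = 0 := by
  have hball {R : ℝ} (hR : 0 < R) : ν (ball x R) ≤ ν {x} := by
    have hiter (k : ℕ) : ν (ball x R) ≤ ν (ball x (R / 2 ^ k)) := by
      induction k with
      | zero => simp
      | succ k ih =>
        have hhalf : R / 2 ^ k = 2 * (R / 2 ^ (k + 1)) := by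
          rw [pow_succ]
          field_simp
        exact ih.trans (hhalf ▸ hν _ (by positivity))
    have hlim : Tendsto (fun k : ℕ ↦ ν (ball x (R / 2 ^ k))) atTop (𝓝 (ν {x})) := by
      have hthick := tendsto_measure_thickening_of_isClosed (μ := ν) (s := {x})
        ⟨1, one_pos, measure_ne_top _ _⟩ isClosed_singleton
      simp only [thickening_singleton] at hthick
      refine hthick.comp (tendsto_nhdsWithin_iff.2 ⟨?_, .of_forall fun k ↦ ?_⟩)
      · exact tendsto_const_nhds.div_atTop (tendsto_pow_atTop_atTop_of_one_lt one_lt_two)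
      · exact mem_Ioi.2 (by positivity)
    exact ge_of_tendsto' hlim hiter
  have hmono : Monotone fun n : ℕ ↦ ball x ((n : ℝ) + 1) :=
    fun _ _ hmn ↦ ball_subset_ball (by gcongr)
  rw [measure_compl (measurableSet_singleton x) (measure_ne_top _ _), tsub_eq_zero_iff_le,
    ← iUnion_ball_nat_succ x, hmono.measure_iUnion]
  exact iSup_le fun n ↦ hball n.cast_add_one_pos

theorem setLIntegral_setLIntegral_sub {G : Type*} [AddCommGroup G] [MeasurableSpace G]
    [MeasurableAdd₂ G] (μ : Measure G) [SFinite μ] [μ.IsAddLeftInvariant] {P Q : Set G}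
    (hQ : MeasurableSet Q) {φ : G → ℝ≥0∞} (hφ : Measurable φ) :
    ∫⁻ x in P, ∫⁻ y in Q, φ (y - x) ∂μ ∂μ = ∫⁻ h, μ (P ∩ (· + h) ⁻¹' Q) * φ h ∂μ := by
  have hmeas : Measurable (Function.uncurry fun x h ↦ Q.indicator (fun _ ↦ φ h) (x + h)) :=
    (hφ.comp measurable_snd).indicator (measurable_add hQ)
  calc
    _ = ∫⁻ x in P, ∫⁻ h, Q.indicator (fun _ ↦ φ h) (x + h) ∂μ ∂μ := by
      refine lintegral_congr fun x ↦ ?_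
      rw [← lintegral_indicator hQ, ← lintegral_add_left_eq_self _ x]
      simp [indicator]
    _ = ∫⁻ h, ∫⁻ x in P, ((· + h) ⁻¹' Q).indicator (fun _ ↦ φ h) x ∂μ ∂μ :=
      lintegral_lintegral_swap hmeas.aemeasurable
    _ = _ := by
      refine lintegral_congr fun h ↦ ?_
      have hQh : MeasurableSet ((· + h) ⁻¹' Q) := measurable_add_const h hQ
      rw [lintegral_indicator_const hQh, Measure.restrict_apply hQh, inter_comm, mul_comm]

theorem measure_inter_preimage_add_self_le {G : Type*} [AddCommGroup G] [MeasurableSpace G]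
    [MeasurableAdd G] (μ : Measure G) [μ.IsAddRightInvariant] {P Q : Set G} {h : G}
    (hmid : ∀ x ∈ P, x + (h + h) ∈ Q → x + h ∈ P ∪ Q) :
    μ (P ∩ (· + (h + h)) ⁻¹' Q) ≤ 2 * μ (P ∩ (· + h) ⁻¹' Q) := by
  have hsub : P ∩ (· + (h + h)) ⁻¹' Q ⊆
      (· + h) ⁻¹' (P ∩ (· + h) ⁻¹' Q) ∪ P ∩ (· + h) ⁻¹' Q := by
    rintro x ⟨hx, hxh⟩
    refine (hmid x hx hxh).imp (fun hP ↦ ⟨hP, ?_⟩) fun hQ ↦ ⟨hx, hQ⟩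
    simpa only [mem_preimage, add_assoc] using hxh
  refine (measure_mono hsub).trans ((measure_union_le _ _).trans_eq ?_)
  rw [measure_preimage_add_right, two_mul]

theorem two_pow_mul_two_mul_enorm_rpow_inv_le {E : Type*} [SeminormedAddCommGroup E]
    [NormedSpace ℝ E] {q : ℝ} {d : ℕ} (hq : d + 1 ≤ q) (h : E) :
    2 ^ d * (2 * (‖(2 : ℝ) • h‖ₑ ^ q)⁻¹) ≤ (‖h‖ₑ ^ q)⁻¹ := by
  have hpow : (2 : ℝ≥0∞) ^ d * 2 ≤ 2 ^ q := by
    rw [← pow_succ, ← ENNReal.rpow_natCast]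
    exact ENNReal.rpow_le_rpow_of_exponent_le one_le_two (mod_cast hq)
  have hnorm : ‖(2 : ℝ) • h‖ₑ = 2 * ‖h‖ₑ := by
    rw [enorm_smul]
    simp [enorm_eq_nnnorm]
  have h2q0 : (2 : ℝ≥0∞) ^ q ≠ 0 := by simp
  have h2qt : (2 : ℝ≥0∞) ^ q ≠ ∞ := by simp
  rw [hnorm, ENNReal.mul_rpow_of_nonneg _ _ (by linarith [d.cast_nonneg (α := ℝ)]),
    ENNReal.mul_inv (.inl h2q0) (.inl h2qt), ← mul_assoc, ← mul_assoc]
  grw [hpow]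
  rw [ENNReal.mul_inv_cancel h2q0 h2qt, one_mul]

section Haar

variable {E : Type*} [NormedAddCommGroup E] [NormedSpace ℝ E] [FiniteDimensional ℝ E]
  [MeasurableSpace E] [BorelSpace E] (μ : Measure E) [μ.IsAddHaarMeasure]

theorem setLIntegral_ball_zero_two_mul {G : E → ℝ≥0∞} (hG : Measurable G) (r : ℝ) :
    ∫⁻ h in ball 0 (2 * r), G h ∂μ =
      2 ^ finrank ℝ E * ∫⁻ h in ball 0 r, G ((2 : ℝ) • h) ∂μ := by
  have hpre : ball (0 : E) r = ((2 : ℝ) • ·) ⁻¹' ball (0 : E) (2 * r) := by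
    ext x
    simp [norm_smul]
  have hscale : ENNReal.ofReal |((2 : ℝ) ^ finrank ℝ E)⁻¹| = (2 ^ finrank ℝ E)⁻¹ := by simp
  rw [hpre, ← setLIntegral_map measurableSet_ball hG (measurable_const_smul (2 : ℝ)),
    Measure.map_addHaar_smul μ two_ne_zero, Measure.restrict_smul, lintegral_smul_measure,
    smul_eq_mul, hscale, ← mul_assoc, ENNReal.mul_inv_cancel (by simp) (by simp), one_mul]

theorem ae_eq_zero_of_two_pow_mul_two_smul_le [Nontrivial E] {G : E → ℝ≥0∞} (hG : Measurable G)
    (hfin : ∫⁻ h, G h ∂μ ≠ ∞) (hscale : ∀ h, 2 ^ finrank ℝ E * G ((2 : ℝ) • h) ≤ G h) :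
    G =ᵐ[μ] 0 := by
  have : IsFiniteMeasure (μ.withDensity G) := isFiniteMeasure_withDensity hfin
  have hcompl : μ.withDensity G {0}ᶜ = 0 :=
    measure_compl_singleton_of_ball_two_mul_le _ 0 fun r _ ↦ by
      simp only [withDensity_apply G measurableSet_ball]
      rw [setLIntegral_ball_zero_two_mul μ hG, ← lintegral_const_mul _ (by fun_prop)]
      exact lintegral_mono hscale
  have huniv : μ.withDensity G univ = 0 := by
    rw [← compl_union_self {(0 : E)}]
    exact measure_union_null hcompl (withDensity_absolutelyContinuous μ G (measure_singleton 0))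
  rwa [withDensity_apply _ .univ, Measure.restrict_univ, lintegral_eq_zero_iff hG] at huniv

theorem measure_eq_zero_or_of_setLIntegral_inv_edist_rpow_ne_top [Nontrivial E] {q : ℝ}
    (hq : finrank ℝ E + 1 ≤ q) {P Q : Set E} (hP : MeasurableSet P) (hQ : MeasurableSet Q)
    (hPQ : Convex ℝ (P ∪ Q))
    (hfin : ∫⁻ x in P, ∫⁻ y in Q, (edist x y ^ q)⁻¹ ∂μ ∂μ ≠ ∞) :
    μ P = 0 ∨ μ Q = 0 := by
  let Ψ : E → ℝ≥0∞ := fun h ↦ μ (P ∩ (· + h) ⁻¹' Q)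
  have hΨ : Measurable Ψ := measurable_measure_prodMk_left
    ((measurable_snd hP).inter ((measurable_snd.add measurable_fst) hQ))
  have hΨ_two (h : E) : Ψ ((2 : ℝ) • h) ≤ 2 * Ψ h := by
    rw [two_smul]
    refine measure_inter_preimage_add_self_le μ fun x hx hxh ↦ ?_
    convert! hPQ.midpoint_mem (.inl hx) (.inr hxh) using 1
    rw [midpoint_eq_smul_add, invOf_eq_inv]
    module
  have hΨ_ae : ∀ᵐ h ∂μ, Ψ h * (‖h‖ₑ ^ q)⁻¹ = 0 := by
    refine ae_eq_zero_of_two_pow_mul_two_smul_le μ (by fun_prop) ?_ fun h ↦ ?_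
    · rw [← setLIntegral_setLIntegral_sub μ hQ (by fun_prop)]
      simpa only [← edist_eq_enorm_sub, edist_comm] using hfin
    · calc
        _ ≤ 2 ^ finrank ℝ E * (2 * Ψ h * (‖(2 : ℝ) • h‖ₑ ^ q)⁻¹) := by gcongr; exact hΨ_two h
        _ = Ψ h * (2 ^ finrank ℝ E * (2 * (‖(2 : ℝ) • h‖ₑ ^ q)⁻¹)) := by ring
        _ ≤ Ψ h * (‖h‖ₑ ^ q)⁻¹ := by gcongr; exact two_pow_mul_two_mul_enorm_rpow_inv_le hq h
  have hprod : μ Q * μ P = 0 := by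
    have hq0 : 0 ≤ q := by linarith [(finrank ℝ E).cast_nonneg (α := ℝ)]
    have hker (h : E) : (‖h‖ₑ ^ q)⁻¹ ≠ 0 :=
      ENNReal.inv_ne_zero.2 (ENNReal.rpow_ne_top_of_nonneg hq0 enorm_ne_top)
    have hΨ_zero : Ψ =ᵐ[μ] 0 := hΨ_ae.mono fun h hh ↦ (mul_eq_zero.1 hh).resolve_right (hker h)
    have hfubini := setLIntegral_setLIntegral_sub μ (P := P) hQ (measurable_const (a := (1 : ℝ≥0∞)))
    simp only [lintegral_const, Measure.restrict_apply_univ, one_mul, mul_one] at hfubini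
    rw [hfubini]
    exact (lintegral_congr_ae hΨ_zero).trans lintegral_zero
  exact (mul_eq_zero.1 hprod).symm

end Haar

section Topology

theorem exists_mem_forall_measure_inter_preimage_ne_zero {α X : Type*} [MeasurableSpace α]
    [TopologicalSpace X] [PseudoMetrizableSpace X] {μ : Measure α} {w : α → X}
    (hw : IsSeparable (range w)) {s : Set α} (hs : μ s ≠ 0) :
    ∃ x ∈ s, ∀ t ∈ 𝓝 (w x), μ (s ∩ w ⁻¹' t) ≠ 0 := by
  have : SecondCountableTopology (range w) := hw.secondCountableTopology
  let : TopologicalSpace α := .induced (rangeFactorization w) inferInstance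
  have : SecondCountableTopology α := secondCountableTopology_induced _ _ (rangeFactorization w)
  have hfact : Continuous (rangeFactorization w) := continuous_induced_dom
  have hcont : Continuous w := continuous_subtype_val.comp hfact
  obtain ⟨x, hx, hpos⟩ := exists_mem_forall_mem_nhdsWithin_pos_measure hs
  exact ⟨x, hx, fun t ht ↦ (hpos _ (inter_mem self_mem_nhdsWithin
    (mem_nhdsWithin_of_mem_nhds (hcont.continuousAt ht)))).ne'⟩

theorem ae_mem_or_ae_notMem_of_isPreconnected {X : Type*} [TopologicalSpace X]
    [HereditarilyLindelofSpace X] [MeasurableSpace X] {μ : Measure X} [μ.IsOpenPosMeasure]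
    {s A : Set X} (hs : IsPreconnected s) (hA : MeasurableSet A)
    (hloc : ∀ x ∈ s, ∃ t ∈ 𝓝 x, (∀ᵐ y ∂μ.restrict t, y ∈ A) ∨ ∀ᵐ y ∂μ.restrict t, y ∉ A) :
    (∀ᵐ x ∂μ.restrict s, x ∈ A) ∨ ∀ᵐ x ∂μ.restrict s, x ∉ A := by
  have hdisj : Disjoint (μ.restrict Aᶜ).supportᶜ (μ.restrict A).supportᶜ := by
    rw [disjoint_compl_left_iff_subset, compl_subset_iff_union, ← Measure.support_add,
      Measure.restrict_add_restrict_compl hA, Measure.support_eq_univ]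
  have hcomm {B : Set X} (hB : MeasurableSet B) (t : Set X) : μ.restrict t B = μ.restrict B t := by
    rw [Measure.restrict_apply hB, Measure.restrict_apply' hB, inter_comm]
  simp only [ae_iff, not_not, ofPred_mem_eq, ← compl_def, hcomm hA, hcomm hA.compl] at hloc ⊢
  have hcover : s ⊆ (μ.restrict Aᶜ).supportᶜ ∪ (μ.restrict A).supportᶜ := fun x hx ↦ by
    obtain ⟨t, ht, hnull⟩ := hloc x hx
    exact hnull.imp (fun h ↦ Measure.notMem_support_iff_exists.2 ⟨t, ht, h⟩)
      fun h ↦ Measure.notMem_support_iff_exists.2 ⟨t, ht, h⟩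
  exact (hs.subset_or_subset Measure.isOpen_compl_support Measure.isOpen_compl_support hdisj
    hcover).imp (measure_mono_null · Measure.measure_compl_support)
      (measure_mono_null · Measure.measure_compl_support)

end Topology

section Gagliardo

variable {m : ℕ} {X Y : Type*} [PseudoEMetricSpace X] [PseudoEMetricSpace Y] {s p : ℝ}
  {A B : Set (EuclideanSpace ℝ (Fin m))}

theorem gagliardoIntegral_mono (hAB : A ⊆ B) (w : EuclideanSpace ℝ (Fin m) → X) :
    gagliardoIntegral s p A w ≤ gagliardoIntegral s p B w :=
  (lintegral_mono fun _ ↦ lintegral_mono_set hAB).trans (lintegral_mono_set hAB)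

theorem gagliardoIntegral_prodMk_le (hp : 0 ≤ p) {u : EuclideanSpace ℝ (Fin m) → X}
    (hu : StronglyMeasurable u) (v : EuclideanSpace ℝ (Fin m) → Y) :
    gagliardoIntegral s p A (fun x ↦ (u x, v x)) ≤
      gagliardoIntegral s p A u + gagliardoIntegral s p A v := by
  let F (x y : EuclideanSpace ℝ (Fin m)) := edist (u x) (u y) ^ p / edist x y ^ (m + s * p)
  have hF : Measurable (Function.uncurry F) :=
    (((hu.comp_measurable measurable_fst).edist
      (hu.comp_measurable measurable_snd)).measurable.pow_const p).div
        (measurable_edist.pow_const _)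
  simp only [gagliardoIntegral]
  rw [← lintegral_add_left hF.lintegral_prod_right]
  refine lintegral_mono fun x ↦ ?_
  rw [← lintegral_add_left hF.of_uncurry_left]
  refine lintegral_mono fun y ↦ ?_
  rw [← ENNReal.add_div, Prod.edist_eq, (ENNReal.monotone_rpow_of_nonneg hp).map_max]
  exact ENNReal.div_le_div_right (max_le_add_of_nonneg zero_le zero_le) _

theorem MemWsplocOn.prodMk (hp : 0 ≤ p) {u : EuclideanSpace ℝ (Fin m) → X}
    {v : EuclideanSpace ℝ (Fin m) → Y} (hum : StronglyMeasurable u) (hu : MemWsplocOn s p A u)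
    (hv : MemWsplocOn s p A v) : MemWsplocOn s p A fun x ↦ (u x, v x) := fun x hx ↦ by
  obtain ⟨U, hUo, hxU, hUA, hU⟩ := hu x hx
  obtain ⟨V, hVo, hxV, -, hV⟩ := hv x hx
  refine ⟨U ∩ V, hUo.inter hVo, ⟨hxU, hxV⟩, inter_subset_left.trans hUA,
    (gagliardoIntegral_prodMk_le hp hum v).trans_lt (ENNReal.add_lt_top.2 ⟨?_, ?_⟩)⟩
  · exact (gagliardoIntegral_mono inter_subset_left u).trans_lt hU
  · exact (gagliardoIntegral_mono inter_subset_right v).trans_lt hV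

variable {w : EuclideanSpace ℝ (Fin m) → X} {S T : Set X}

theorem setLIntegral_inv_edist_rpow_ne_top_of_areSeparated (hp : 0 ≤ p) (hST : AreSeparated S T)
    (hfin : gagliardoIntegral s p B w ≠ ∞) {P Q : Set (EuclideanSpace ℝ (Fin m))} (hPB : P ⊆ B)
    (hQB : Q ⊆ B) (hPS : ∀ᵐ x ∂volume.restrict P, w x ∈ S)
    (hQT : ∀ᵐ y ∂volume.restrict Q, w y ∈ T) :
    ∫⁻ x in P, ∫⁻ y in Q, (edist x y ^ (m + s * p))⁻¹ ≠ ∞ := by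
  obtain ⟨r, hr0, hr⟩ := hST
  have hle : r ^ p * ∫⁻ x in P, ∫⁻ y in Q, (edist x y ^ (m + s * p))⁻¹ ≤
      gagliardoIntegral s p B w := calc
    _ ≤ ∫⁻ x in P, r ^ p * ∫⁻ y in Q, (edist x y ^ (m + s * p))⁻¹ := lintegral_const_mul_le _ _
    _ ≤ ∫⁻ x in P, ∫⁻ y in Q, edist (w x) (w y) ^ p / edist x y ^ (m + s * p) := by
      refine lintegral_mono_ae (hPS.mono fun x hx ↦ (lintegral_const_mul_le _ _).trans ?_)
      refine lintegral_mono_ae (hQT.mono fun y hy ↦ ?_)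
      rw [← div_eq_mul_inv]
      exact ENNReal.div_le_div_right (ENNReal.rpow_le_rpow (hr _ hx _ hy) hp) _
    _ ≤ gagliardoIntegral s p B w :=
      (lintegral_mono fun _ ↦ lintegral_mono_set hQB).trans (lintegral_mono_set hPB)
  refine fun htop ↦ hfin (top_unique ?_)
  rwa [htop, ENNReal.mul_top (ENNReal.rpow_pos_of_nonneg hr0.bot_lt hp).ne'] at hle

theorem ae_mem_or_ae_notMem_of_gagliardoIntegral_ne_top (hB : Convex ℝ B)
    (hBm : MeasurableSet B) (hm : 1 ≤ m) (hp : 0 ≤ p) (hsp : 1 ≤ s * p)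
    (hfin : gagliardoIntegral s p B w ≠ ∞) (hST : AreSeparated S T)
    (hS : MeasurableSet (w ⁻¹' S)) (hw : ∀ᵐ x ∂volume.restrict B, w x ∈ S ∪ T) :
    (∀ᵐ x ∂volume.restrict B, w x ∈ S) ∨ ∀ᵐ x ∂volume.restrict B, w x ∉ S := by
  have : Nonempty (Fin m) := ⟨⟨0, hm⟩⟩
  have hPS : ∀ᵐ x ∂volume.restrict (B ∩ w ⁻¹' S), w x ∈ S :=
    (ae_restrict_mem (hBm.inter hS)).mono fun _ hx ↦ hx.2
  have hQT : ∀ᵐ x ∂volume.restrict (B \ w ⁻¹' S), w x ∈ T := by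
    filter_upwards [ae_restrict_of_ae_restrict_of_subset sdiff_subset hw,
      ae_restrict_mem (hBm.diff hS)] with x hx hxS using hx.resolve_left hxS.2
  have hdim : (finrank ℝ (EuclideanSpace ℝ (Fin m)) : ℝ) + 1 ≤ m + s * p := by
    rw [finrank_euclideanSpace_fin]
    gcongr
  have hnull : volume (B ∩ w ⁻¹' S) = 0 ∨ volume (B \ w ⁻¹' S) = 0 :=
    measure_eq_zero_or_of_setLIntegral_inv_edist_rpow_ne_top volume hdim (hBm.inter hS)
      (hBm.diff hS) (by rwa [inter_union_sdiff])
      (setLIntegral_inv_edist_rpow_ne_top_of_areSeparated hp hST hfin inter_subset_left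
        sdiff_subset hPS hQT)
  simp only [ae_restrict_iff' hBm]
  refine hnull.symm.imp (fun h ↦ ?_) fun h ↦ ?_
  · filter_upwards [measure_eq_zero_iff_ae_notMem.1 h] with x hx hxB
      using not_not.1 fun hxS ↦ hx ⟨hxB, hxS⟩
  · filter_upwards [measure_eq_zero_iff_ae_notMem.1 h] with x hx hxB hxS using hx ⟨hxB, hxS⟩

theorem MemWsplocOn.ae_mem_or_ae_notMem_of_areSeparated
    {Ω : Set (EuclideanSpace ℝ (Fin m))} (hwΩ : MemWsplocOn s p Ω w) (hΩ : IsPreconnected Ω)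
    (hm : 1 ≤ m) (hp : 0 ≤ p) (hsp : 1 ≤ s * p) (hST : AreSeparated S T)
    (hS : MeasurableSet (w ⁻¹' S)) (hw : ∀ᵐ x ∂volume.restrict Ω, w x ∈ S ∪ T) :
    (∀ᵐ x ∂volume.restrict Ω, w x ∈ S) ∨ ∀ᵐ x ∂volume.restrict Ω, w x ∉ S := by
  refine ae_mem_or_ae_notMem_of_isPreconnected hΩ hS fun x hx ↦ ?_
  obtain ⟨U, hUo, hxU, hUΩ, hU⟩ := hwΩ x hx
  obtain ⟨r, hr, hball⟩ := Metric.isOpen_iff.1 hUo x hxU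
  exact ⟨ball x r, ball_mem_nhds x hr,
    ae_mem_or_ae_notMem_of_gagliardoIntegral_ne_top (w := w) (convex_ball x r) measurableSet_ball
      hm hp hsp ((gagliardoIntegral_mono hball w).trans_lt hU).ne hST hS
      (ae_restrict_of_ae_restrict_of_subset (hball.trans hUΩ) hw)⟩

end Gagliardo

section Covering

theorem isSeparated_preimage_singleton_of_dist_eq {X Y : Type*} [MetricSpace X]
    [PseudoMetricSpace Y] {f : X → Y} {ρ : ℝ} (hρ : 0 ≤ ρ)
    (hf : ∀ a b, dist a b ≤ ρ → dist (f a) (f b) = dist a b) (y : Y) :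
    IsSeparated (ENNReal.ofReal ρ) (f ⁻¹' {y}) := by
  rintro a rfl b hb hab
  rw [edist_dist, ENNReal.ofReal_lt_ofReal_iff_of_nonneg hρ]
  refine not_le.1 fun hle ↦ hab (dist_eq_zero.1 ?_)
  rw [← hf a b hle, hb, dist_self]

variable {X Y : Type*} [EMetricSpace X] {π : X → Y} {ρ : ℝ≥0∞}

theorem eq_apply_of_edist_le_half (hπ : ∀ y, IsSeparated ρ (π ⁻¹' {y})) {τ : X ≃ᵢ X}
    (hτ : ∀ x, π (τ x) = π x) {a b : X × X} (hb : π b.1 = π b.2) (ha : a.2 = τ a.1)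
    (hab : edist a b ≤ ρ / 2) : b.2 = τ b.1 := by
  by_contra hne
  have hsep : ρ < edist b.2 (τ b.1) := hπ (π b.2) rfl ((hτ b.1).trans hb) hne
  refine hsep.not_ge ?_
  calc edist b.2 (τ b.1) ≤ edist b.2 (τ a.1) + edist (τ a.1) (τ b.1) := edist_triangle ..
    _ = edist a.2 b.2 + edist a.1 b.1 := by rw [τ.isometry.edist_eq, ← ha, edist_comm]
    _ ≤ ρ / 2 + ρ / 2 := add_le_add ((le_max_right ..).trans hab) ((le_max_left ..).trans hab)
    _ = ρ := ENNReal.add_halves ρ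

theorem areSeparated_graph (hρ : ρ ≠ 0) (hπ : ∀ y, IsSeparated ρ (π ⁻¹' {y})) {τ : X ≃ᵢ X}
    (hτ : ∀ x, π (τ x) = π x) :
    AreSeparated {a : X × X | a.2 = τ a.1} {b : X × X | π b.1 = π b.2 ∧ b.2 ≠ τ b.1} :=
  ⟨ρ / 2, (ENNReal.half_pos hρ).ne', fun _ ha _ hb ↦
    le_of_not_ge fun hab ↦ hb.2 (eq_apply_of_edist_le_half hπ hτ hb.1 ha hab)⟩

theorem exists_frequently_ae_eq_apply (hρ : ρ ≠ 0) (hπ : ∀ y, IsSeparated ρ (π ⁻¹' {y}))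
    (hnormal : ∀ a b, π a = π b → ∃ τ : X ≃ᵢ X, (∀ x, π (τ x) = π x) ∧ τ a = b)
    {α : Type*} [MeasurableSpace α] {μ : Measure α} [NeZero μ] {u v : α → X}
    (hu : StronglyMeasurable u) (hv : StronglyMeasurable v) (huv : ∀ᵐ x ∂μ, π (u x) = π (v x)) :
    ∃ τ : X ≃ᵢ X, (∀ x, π (τ x) = π x) ∧ ∃ᵐ x ∂μ, v x = τ (u x) := by
  have hs : μ {x | π (u x) = π (v x)} ≠ 0 := by
    rw [measure_congr (eventuallyEq_univ.2 huv)]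
    exact NeZero.ne _
  obtain ⟨x₀, hx₀, hpos⟩ := exists_mem_forall_measure_inter_preimage_ne_zero
    (hu.prodMk hv).isSeparable_range hs
  obtain ⟨τ, hτ, hτx₀⟩ := hnormal _ _ hx₀
  refine ⟨τ, hτ, frequently_ae_iff.2 fun hnull ↦
    hpos _ (closedEBall_mem_nhds _ (ENNReal.half_pos hρ)) (measure_mono_null ?_ hnull)⟩
  rintro x ⟨hx, hdist⟩
  exact eq_apply_of_edist_le_half hπ hτ (a := (u x₀, v x₀)) (b := (u x, v x)) hx hτx₀.symm
    (mem_closedEBall'.1 hdist)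

end Covering

theorem lifting_uniqueness_normal_covering_general {s p : ℝ} {m : ℕ} (hp : 0 ≤ p)
    (hsp : 1 ≤ s * p) (hm : 1 ≤ m) {X Y : Type*} [EMetricSpace X] [MeasurableSpace X]
    [BorelSpace X] {π : X → Y} {ρ : ℝ≥0∞} (hρ : ρ ≠ 0) (hπ : ∀ y, IsSeparated ρ (π ⁻¹' {y}))
    (hnormal : ∀ a b, π a = π b → ∃ τ : X ≃ᵢ X, (∀ x, π (τ x) = π x) ∧ τ a = b)
    {Ω : Set (EuclideanSpace ℝ (Fin m))} (hΩo : IsOpen Ω) (hΩc : IsConnected Ω)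
    {u v : EuclideanSpace ℝ (Fin m) → X} (hum : Measurable u) (hvm : Measurable v)
    (hu : MemWsplocOn s p Ω u) (hv : MemWsplocOn s p Ω v)
    (huv : ∀ᵐ x ∂volume.restrict Ω, π (u x) = π (v x)) :
    ∃ τ : X ≃ᵢ X, (∀ x, π (τ x) = π x) ∧ ∀ᵐ x ∂volume.restrict Ω, v x = τ (u x) := by
  have hus := stronglyMeasurable_of_standardBorelSpace hum
  have hvs := stronglyMeasurable_of_standardBorelSpace hvm
  have : NeZero (volume.restrict Ω) :=
    ⟨Measure.restrict_eq_zero.not.2 (hΩo.measure_ne_zero volume hΩc.nonempty)⟩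
  obtain ⟨τ, hτ, hfreq⟩ := exists_frequently_ae_eq_apply hρ hπ hnormal hus hvs huv
  have hmeas : MeasurableSet {x | v x = τ (u x)} :=
    hvs.measurableSet_eq_fun (τ.continuous.comp_stronglyMeasurable hus)
  have hcover : ∀ᵐ x ∂volume.restrict Ω, (u x, v x) ∈
      {a : X × X | a.2 = τ a.1} ∪ {b : X × X | π b.1 = π b.2 ∧ b.2 ≠ τ b.1} :=
    huv.mono fun x hx ↦ (em (v x = τ (u x))).imp_right fun hne ↦ ⟨hx, hne⟩
  exact ⟨τ, hτ, ((hu.prodMk hp hus hv).ae_mem_or_ae_notMem_of_areSeparated hΩc.isPreconnected hm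
    hp hsp (areSeparated_graph hρ hπ hτ) hmeas hcover).resolve_right hfreq⟩

/-- **Uniqueness of liftings up to a deck transformation, for normal coverings.** For
`sp ≥ 1`, let `π : Ñ → N` be a covering map between metric spaces, nonexpansive and an
isometry at scale `ρ > 0`, with `Ñ` connected, some fiber at most countable, all deck
transformations isometries, and the covering normal. If `Ω ⊆ ℝ^m` is a connected open set
and `ũ, ṽ ∈ W^{s,p}_loc(Ω,Ñ)` are Borel measurable with `π ∘ ũ = π ∘ ṽ` a.e. on `Ω`, then
there is a deck transformation `τ` with `ṽ = τ ∘ ũ` a.e. on `Ω`. -/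
theorem lifting_uniqueness_normal_covering (s p : ℝ) (m : ℕ) (hs0 : 0 < s) (hs1 : s < 1)
    (hp1 : 1 ≤ p) (hsp : 1 ≤ s * p) (hm : 1 ≤ m)
    {Ntl N : Type*} [MetricSpace Ntl] [MetricSpace N] [ConnectedSpace Ntl]
    [MeasurableSpace Ntl] [BorelSpace Ntl]
    (π : Ntl → N) (hcov : IsCoveringMap π) (ρ : ℝ) (hρ : 0 < ρ)
    (hnonexp : ∀ a b : Ntl, dist (π a) (π b) ≤ dist a b)
    (hiso : ∀ a b : Ntl, dist a b ≤ ρ → dist (π a) (π b) = dist a b)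
    (hfiber : ∃ y₀ : N, (π ⁻¹' {y₀}).Countable)
    (hdeckiso : ∀ τ : Ntl ≃ₜ Ntl, (∀ x, π (τ x) = π x) → Isometry τ)
    (hnormal : ∀ a b : Ntl, π a = π b → ∃ τ : Ntl ≃ₜ Ntl, (∀ x, π (τ x) = π x) ∧ τ a = b)
    (Ω : Set (EuclideanSpace ℝ (Fin m))) (hΩo : IsOpen Ω) (hΩc : IsConnected Ω)
    (ut vt : EuclideanSpace ℝ (Fin m) → Ntl) (hutm : Measurable ut) (hvtm : Measurable vt)
    (hutloc : MemWsplocOn s p Ω ut) (hvtloc : MemWsplocOn s p Ω vt)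
    (hπ : ∀ᵐ x ∂(volume.restrict Ω), π (ut x) = π (vt x)) :
    ∃ τ : Ntl ≃ₜ Ntl, (∀ x, π (τ x) = π x) ∧
      ∀ᵐ x ∂(volume.restrict Ω), vt x = τ (ut x) := by
  have hnormal' (a b : Ntl) (hab : π a = π b) : ∃ τ : Ntl ≃ᵢ Ntl, (∀ x, π (τ x) = π x) ∧ τ a = b :=
    let ⟨τ, hτ, hτa⟩ := hnormal a b hab
    ⟨⟨τ.toEquiv, hdeckiso τ hτ⟩, hτ, hτa⟩
  obtain ⟨τ, hτ, hae⟩ := lifting_uniqueness_normal_covering_general (zero_le_one.trans hp1) hsp hm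
    (ENNReal.ofReal_pos.2 hρ).ne' (isSeparated_preimage_singleton_of_dist_eq hρ.le hiso) hnormal'
    hΩo hΩc hutm hvtm hutloc hvtloc hπ
  exact ⟨τ.toHomeomorph, hτ, hae⟩
end

section
/- Let 0<s<1 and 1≤p<∞ satisfy sp ≥ 1, and let m ≥ 1. Let (Ñ, d_Ñ) and (N, d_N) be metric spaces and let π : Ñ → N be a topological covering map which is nonexpansive and a local isometry in the sense that every point a ∈ Ñ has ε(a) > 0 such that d_N(π(x),π(y)) = d_Ñ(x,y) for all x,y ∈ B(a, ε(a)). Let Ω ⊆ ℝ^m be a connected open set and let ũ : Ω → Ñ be a continuous map in W^{s,p}_loc(Ω, Ñ) with ∫_Ω∫_Ω d_Ñ(ũ(x),ũ(y))^p/|x-y|^{m+sp} dx dy = ∞. If ṽ : Ω → Ñ is Borel measurable with ∫_Ω∫_Ω d_Ñ(ṽ(x),ṽ(y))^p/|x-y|^{m+sp} dx dy < ∞ and π ∘ ṽ = π ∘ ũ almost everywhere on Ω, then ũ(x) ≠ ṽ(x) for almost every x ∈ Ω. -/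
open MeasureTheory Set ENNReal Metric

/-!
On a small ball `B` around any point of `Ω`, `ũ` stays in a ball `B(a, ε/2)` such that `π` is
injective on `B(a, ε)`. Almost everywhere on `B`, either `ṽ = ũ`, so that `ṽ ∈ B(a, ε/2)`, or
`ṽ ∉ B(a, ε)`: the two cases are a distance `ε/2` apart, and a map of finite `W^{s,p}` energy with
`sp ≥ 1` cannot jump.

For the latter, let `B = P ∪ Q` be convex and let `I(δ)` be the integral of `|x - y|^{-t}`,
`t = m + sp`, over the pairs of `P × Q` at distance less than `δ`. The midpoint of such a pair lies
in `P` or in `Q`, so it forms a pair in `P × Q` at half the distance with one of the two points;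
a change of variables gives `I(2δ) ≤ 2 · 2^{m - t} · I(δ) ≤ I(δ)`. If `I(∞)` is finite, then
`I(δ) → 0` as `δ → 0`, which forces `I(∞) = 0`, and one of `P`, `Q` is null.

Since `Ω` is connected, the local alternative is a global one, and `ũ = ṽ` almost everywhere is
impossible because the energy of `ũ` is infinite.
-/

open Filter Topology Module

section DoublingFiniteMeasure

variable {α : Type*} [MeasurableSpace α] {ν : Measure α} {f : α → ℝ≥0∞}

lemma measure_lt_two_pow_mul_le_of_doubling (hdouble : ∀ δ, ν {a | f a < 2 * δ} ≤ ν {a | f a < δ})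
    (n : ℕ) (δ : ℝ≥0∞) : ν {a | f a < 2 ^ n * δ} ≤ ν {a | f a < δ} := by
  induction n with
  | zero => simp
  | succ n ih => simpa only [pow_succ', mul_assoc] using (hdouble _).trans ih

lemma measure_lt_top_le_measure_lt_of_doubling
    (hdouble : ∀ δ, ν {a | f a < 2 * δ} ≤ ν {a | f a < δ})
    {δ : ℝ≥0∞} (hδ : δ ≠ 0) : ν {a | f a < ∞} ≤ ν {a | f a < δ} := by
  have hmono : Monotone fun n : ℕ => {a | f a < 2 ^ n * δ} := fun k n hkn a ha =>
    lt_of_lt_of_le ha (mul_le_mul_left (pow_le_pow_right₀ one_le_two hkn) δ)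
  have hcover : {a | f a < ∞} ⊆ ⋃ n : ℕ, {a | f a < 2 ^ n * δ} := fun a ha => by
    obtain ⟨n, hn⟩ := ENNReal.exists_nat_mul_gt hδ (ne_of_lt ha)
    refine mem_iUnion.2 ⟨n, hn.trans_le ?_⟩
    gcongr
    exact_mod_cast n.lt_two_pow_self.le
  calc ν {a | f a < ∞} ≤ ν (⋃ n : ℕ, {a | f a < 2 ^ n * δ}) := measure_mono hcover
    _ = ⨆ n : ℕ, ν {a | f a < 2 ^ n * δ} := hmono.measure_iUnion
    _ ≤ ν {a | f a < δ} := iSup_le fun n => measure_lt_two_pow_mul_le_of_doubling hdouble n δ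

lemma measure_lt_top_le_measure_eq_zero_of_doubling [IsFiniteMeasure ν] (hf : Measurable f)
    (hdouble : ∀ δ, ν {a | f a < 2 * δ} ≤ ν {a | f a < δ}) :
    ν {a | f a < ∞} ≤ ν {a | f a = 0} := by
  have hanti : Antitone fun n : ℕ => {a | f a < (n : ℝ≥0∞)⁻¹} := fun k n hkn a ha =>
    lt_of_lt_of_le ha (ENNReal.inv_le_inv.2 (Nat.cast_le.2 hkn))
  have hinter : ⋂ n : ℕ, {a | f a < (n : ℝ≥0∞)⁻¹} ⊆ {a | f a = 0} := fun a ha => by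
    by_contra hne
    obtain ⟨n, hn⟩ := ENNReal.exists_inv_nat_lt hne
    exact lt_asymm hn (mem_iInter.1 ha n)
  calc ν {a | f a < ∞} ≤ ⨅ n : ℕ, ν {a | f a < (n : ℝ≥0∞)⁻¹} :=
        le_iInf fun n => measure_lt_top_le_measure_lt_of_doubling hdouble (by simp)
    _ = ν (⋂ n : ℕ, {a | f a < (n : ℝ≥0∞)⁻¹}) :=
        (hanti.measure_iInter (fun n => (measurableSet_lt hf measurable_const).nullMeasurableSet)
          ⟨0, measure_ne_top _ _⟩).symm
    _ ≤ ν {a | f a = 0} := measure_mono hinter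

end DoublingFiniteMeasure

section Kernel

variable {X : Type*} [PseudoEMetricSpace X]

/-- The kernel `|x - y|^{-t}` of the Gagliardo integral, on pairs of points. For `t > 0` it takes
the value `∞` on the diagonal. -/
noncomputable def powerKernel (t : ℝ) (z : X × X) : ℝ≥0∞ :=
  (edist z.1 z.2 ^ t)⁻¹

/-- The pairs in `P × Q` at distance less than `δ`, to which the kernel is truncated in the
doubling argument. -/
def nearPairs (P Q : Set X) (δ : ℝ≥0∞) : Set (X × X) :=
  P ×ˢ Q ∩ {z | edist z.1 z.2 < δ}

variable [SecondCountableTopology X] [MeasurableSpace X] [OpensMeasurableSpace X]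

lemma measurable_powerKernel (t : ℝ) : Measurable (powerKernel t : X × X → ℝ≥0∞) :=
  ((measurable_edist.comp measurable_id).pow_const t).inv

lemma measurableSet_nearPairs {P Q : Set X} (hP : MeasurableSet P) (hQ : MeasurableSet Q)
    (δ : ℝ≥0∞) : MeasurableSet (nearPairs P Q δ) :=
  (hP.prod hQ).inter (measurableSet_lt measurable_edist measurable_const)

lemma setLIntegral_powerKernel_preimage_le {ρ : Measure (X × X)} {T : X × X → X × X} {d : ℕ}
    {t : ℝ} (hT : MeasurePreserving T ρ ((2 : ℝ≥0∞) ^ d • ρ))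
    (hhalf : ∀ z, 2 * edist (T z).1 (T z).2 = edist z.1 z.2) (ht : d + 1 ≤ t)
    {S : Set (X × X)} (hS : MeasurableSet S) :
    ∫⁻ z in T ⁻¹' S, powerKernel t z ∂ρ ≤ 2⁻¹ * ∫⁻ z in S, powerKernel t z ∂ρ := by
  have ht₀ : 0 ≤ t := le_trans (by positivity) ht
  have hscale (z : X × X) : powerKernel t z = (2 ^ t)⁻¹ * powerKernel t (T z) := by
    rw [powerKernel, ← hhalf, ENNReal.mul_rpow_of_nonneg _ _ ht₀,
      ENNReal.mul_inv (.inl (by simp)) (.inl (by finiteness)), powerKernel]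
  have hpow : ((2 : ℝ≥0∞) ^ t)⁻¹ * 2 ^ d ≤ 2⁻¹ := by
    rw [← ENNReal.rpow_natCast, ← ENNReal.rpow_neg, ← ENNReal.rpow_neg_one,
      ← ENNReal.rpow_add _ _ two_ne_zero ENNReal.ofNat_ne_top]
    exact ENNReal.rpow_le_rpow_of_exponent_le one_le_two (by linarith)
  calc ∫⁻ z in T ⁻¹' S, powerKernel t z ∂ρ
      = (2 ^ t)⁻¹ * ∫⁻ z in T ⁻¹' S, powerKernel t (T z) ∂ρ := by
        rw [lintegral_congr hscale]
        exact lintegral_const_mul _ ((measurable_powerKernel t).comp hT.measurable)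
    _ = (2 ^ t)⁻¹ * 2 ^ d * ∫⁻ z in S, powerKernel t z ∂ρ := by
        rw [hT.setLIntegral_comp_preimage hS (measurable_powerKernel t), Measure.restrict_smul,
          lintegral_smul_measure, smul_eq_mul, mul_assoc]
    _ ≤ 2⁻¹ * ∫⁻ z in S, powerKernel t z ∂ρ := by gcongr

end Kernel

section Midpoint

variable {E : Type*} [NormedAddCommGroup E] [NormedSpace ℝ E]

lemma two_mul_edist_left_midpoint (x y : E) : 2 * edist x (midpoint ℝ x y) = edist x y := by
  rw [edist_nndist, nndist_left_midpoint, edist_nndist, Real.nnnorm_two, ← ENNReal.coe_ofNat,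
    ← ENNReal.coe_mul, mul_inv_cancel_left₀ two_ne_zero]

lemma two_mul_edist_midpoint_right (x y : E) : 2 * edist (midpoint ℝ x y) y = edist x y := by
  rw [midpoint_comm, edist_comm, two_mul_edist_left_midpoint, edist_comm]

lemma nearPairs_two_mul_subset {P Q : Set E} (hPQ : Convex ℝ (P ∪ Q)) (δ : ℝ≥0∞) :
    nearPairs P Q (2 * δ) ⊆ (fun z => (z.1, midpoint ℝ z.1 z.2)) ⁻¹' nearPairs P Q δ ∪
      (fun z => (midpoint ℝ z.1 z.2, z.2)) ⁻¹' nearPairs P Q δ := by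
  rintro ⟨x, y⟩ ⟨⟨hx, hy⟩, hxy : edist x y < 2 * δ⟩
  rcases hPQ.midpoint_mem (Or.inl hx) (Or.inr hy) with hmid | hmid
  · rw [← two_mul_edist_midpoint_right] at hxy
    exact Or.inr ⟨⟨hmid, hy⟩, lt_of_mul_lt_mul_left' hxy⟩
  · rw [← two_mul_edist_left_midpoint] at hxy
    exact Or.inl ⟨⟨hx, hmid⟩, lt_of_mul_lt_mul_left' hxy⟩

variable [FiniteDimensional ℝ E] [MeasurableSpace E] [BorelSpace E]
  (μ : Measure E) [μ.IsAddHaarMeasure]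

lemma map_midpoint_left (x : E) : μ.map (midpoint ℝ x) = (2 : ℝ≥0∞) ^ finrank ℝ E • μ := by
  have hmid : midpoint ℝ x = (fun y : E => (2⁻¹ : ℝ) • y) ∘ (x + ·) := by
    ext y
    simp [midpoint_eq_smul_add]
  rw [hmid, ← Measure.map_map (by fun_prop) (by fun_prop), map_add_left_eq_self,
    Measure.map_addHaar_smul μ (by norm_num), inv_pow, inv_inv, abs_of_pos (by positivity),
    ENNReal.ofReal_pow zero_le_two, ENNReal.ofReal_ofNat]

lemma measurePreserving_fst_midpoint :
    MeasurePreserving (fun z : E × E => (z.1, midpoint ℝ z.1 z.2)) (μ.prod μ)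
      ((2 : ℝ≥0∞) ^ finrank ℝ E • μ.prod μ) := by
  rw [← Measure.prod_smul_right]
  refine (MeasurePreserving.id μ).skew_product ?_ (.of_forall (map_midpoint_left μ))
  simp only [Function.uncurry_def, midpoint_eq_smul_add]
  fun_prop

lemma measurePreserving_midpoint_snd :
    MeasurePreserving (fun z : E × E => (midpoint ℝ z.1 z.2, z.2)) (μ.prod μ)
      ((2 : ℝ≥0∞) ^ finrank ℝ E • μ.prod μ) := by
  have hswap : MeasurePreserving (Prod.swap : E × E → E × E) (μ.prod μ) (μ.prod μ) :=
    Measure.measurePreserving_swap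
  have h := (hswap.smul_measure ((2 : ℝ≥0∞) ^ finrank ℝ E)).comp
    ((measurePreserving_fst_midpoint μ).comp hswap)
  refine (congrArg (MeasurePreserving · _ _) ?_).mp h
  ext z <;> simp [midpoint_comm]

end Midpoint

section ConvexDichotomy

variable {E : Type*} [NormedAddCommGroup E] [NormedSpace ℝ E] [FiniteDimensional ℝ E]
  [MeasurableSpace E] [BorelSpace E] (μ : Measure E) [μ.IsAddHaarMeasure] {P Q : Set E} {t : ℝ}

lemma setLIntegral_powerKernel_nearPairs_two_mul_le (hP : MeasurableSet P) (hQ : MeasurableSet Q)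
    (hPQ : Convex ℝ (P ∪ Q)) (ht : finrank ℝ E + 1 ≤ t) (δ : ℝ≥0∞) :
    ∫⁻ z in nearPairs P Q (2 * δ), powerKernel t z ∂μ.prod μ ≤
      ∫⁻ z in nearPairs P Q δ, powerKernel t z ∂μ.prod μ := by
  have hS := measurableSet_nearPairs hP hQ δ
  calc ∫⁻ z in nearPairs P Q (2 * δ), powerKernel t z ∂μ.prod μ
      ≤ _ := lintegral_mono_set (nearPairs_two_mul_subset hPQ δ)
    _ ≤ _ := lintegral_union_le _ _ _
    _ ≤ 2⁻¹ * ∫⁻ z in nearPairs P Q δ, powerKernel t z ∂μ.prod μ +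
          2⁻¹ * ∫⁻ z in nearPairs P Q δ, powerKernel t z ∂μ.prod μ :=
        add_le_add
          (setLIntegral_powerKernel_preimage_le (measurePreserving_fst_midpoint μ)
            (fun z => two_mul_edist_left_midpoint z.1 z.2) ht hS)
          (setLIntegral_powerKernel_preimage_le (measurePreserving_midpoint_snd μ)
            (fun z => two_mul_edist_midpoint_right z.1 z.2) ht hS)
    _ = ∫⁻ z in nearPairs P Q δ, powerKernel t z ∂μ.prod μ := by
        rw [← add_mul, ENNReal.inv_two_add_inv_two, one_mul]

lemma measure_eq_zero_or_of_setLIntegral_powerKernel_ne_top (hP : MeasurableSet P)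
    (hQ : MeasurableSet Q) (hPQ : Convex ℝ (P ∪ Q)) (ht : finrank ℝ E + 1 ≤ t)
    (hfin : ∫⁻ z in P ×ˢ Q, powerKernel t z ∂μ.prod μ ≠ ∞) : μ P = 0 ∨ μ Q = 0 := by
  have ht₀ : 0 < t := lt_of_lt_of_le (by positivity) ht
  have hkernel : Measurable (powerKernel t : E × E → ℝ≥0∞) := measurable_powerKernel t
  have hdist : Measurable fun z : E × E => edist z.1 z.2 := by fun_prop
  set ν := ((μ.prod μ).restrict (P ×ˢ Q)).withDensity (powerKernel t) with hν
  have : IsFiniteMeasure ν := isFiniteMeasure_withDensity hfin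
  have hnear (δ : ℝ≥0∞) :
      ν {z | edist z.1 z.2 < δ} = ∫⁻ z in nearPairs P Q δ, powerKernel t z ∂μ.prod μ := by
    have hδ := measurableSet_lt hdist (measurable_const (a := δ))
    rw [hν, withDensity_apply _ hδ, Measure.restrict_restrict hδ, inter_comm, nearPairs]
  have hdouble (δ : ℝ≥0∞) : ν {z | edist z.1 z.2 < 2 * δ} ≤ ν {z | edist z.1 z.2 < δ} := by
    rw [hnear, hnear]
    exact setLIntegral_powerKernel_nearPairs_two_mul_le μ hP hQ hPQ ht δ
  have hdiag : ν {z | edist z.1 z.2 = 0} = 0 := by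
    refine withDensity_absolutelyContinuous _ _ (measure_mono_null (fun z hz => ?_)
      (ae_iff.1 (ae_lt_top hkernel hfin)))
    rw [mem_ofPred_eq] at hz
    simp only [mem_ofPred_eq, powerKernel, hz, ENNReal.zero_rpow_of_pos ht₀, ENNReal.inv_zero,
      lt_self_iff_false, not_false_eq_true]
  have huniv : ν univ = 0 := by
    have h := measure_lt_top_le_measure_eq_zero_of_doubling hdist hdouble
    simpa only [edist_lt_top, ofPred_true, hdiag, nonpos_iff_eq_zero] using h
  have hpos (z : E × E) : powerKernel t z ≠ 0 :=
    ENNReal.inv_ne_zero.2 (ENNReal.rpow_ne_top_of_nonneg ht₀.le (edist_ne_top _ _))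
  rw [hν, withDensity_apply_eq_zero hkernel] at huniv
  simpa [hpos] using huniv

end ConvexDichotomy

section Gagliardo

variable {m : ℕ} {X : Type*} [PseudoEMetricSpace X] {s p : ℝ}
  {A B : Set (EuclideanSpace ℝ (Fin m))} {w : EuclideanSpace ℝ (Fin m) → X}

lemma gagliardoIntegral_congr_ae {u v : EuclideanSpace ℝ (Fin m) → X}
    (h : ∀ᵐ x ∂volume.restrict A, u x = v x) :
    gagliardoIntegral s p A u = gagliardoIntegral s p A v := by
  refine lintegral_congr_ae ?_
  filter_upwards [h] with x hx
  refine lintegral_congr_ae ?_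
  filter_upwards [h] with y hy
  rw [hx, hy]

lemma gagliardoIntegral_mono_set (hBA : B ⊆ A) :
    gagliardoIntegral s p B w ≤ gagliardoIntegral s p A w :=
  (lintegral_mono_set hBA).trans (lintegral_mono fun _ => lintegral_mono_set hBA)

lemma mul_setLIntegral_powerKernel_le_gagliardoIntegral (hp : 0 ≤ p)
    {P Q : Set (EuclideanSpace ℝ (Fin m))} (hP : MeasurableSet P) (hPA : P ⊆ A) (hQA : Q ⊆ A)
    {c : ℝ≥0∞} (hdist : ∀ x ∈ P, ∀ᵐ y ∂volume.restrict Q, c ≤ edist (w x) (w y)) :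
    c ^ p * ∫⁻ z in P ×ˢ Q, powerKernel (m + s * p) z ≤ gagliardoIntegral s p A w := by
  have hker := measurable_powerKernel (X := EuclideanSpace ℝ (Fin m)) (m + s * p)
  rw [Measure.volume_eq_prod, ← Measure.prod_restrict, ← lintegral_const_mul _ hker,
    lintegral_prod _ (hker.const_mul _).aemeasurable]
  refine (setLIntegral_mono' hP fun x hx => ?_).trans (lintegral_mono_set hPA)
  refine (lintegral_mono_ae ?_).trans (lintegral_mono_set hQA)
  filter_upwards [hdist x hx] with y hy
  rw [powerKernel, div_eq_mul_inv]
  gcongr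

lemma ae_mem_or_ae_mem_of_areSeparated [MeasurableSpace X] (hp : 0 ≤ p) (hsp : 1 ≤ s * p)
    (hB : Convex ℝ B) (hBm : MeasurableSet B) (hw : Measurable w)
    (hfin : gagliardoIntegral s p B w < ∞) {C D : Set X} (hC : MeasurableSet C)
    (hsep : AreSeparated C D) (hCD : ∀ᵐ x ∂volume.restrict B, w x ∈ C ∪ D) :
    (∀ᵐ x ∂volume.restrict B, w x ∈ C) ∨ ∀ᵐ x ∂volume.restrict B, w x ∈ D := by
  obtain ⟨c, hc, hdist⟩ := hsep
  have hV : MeasurableSet (w ⁻¹' C) := hw hC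
  have hfar : ∀ x ∈ B ∩ w ⁻¹' C, ∀ᵐ y ∂volume.restrict (B \ w ⁻¹' C),
      c ≤ edist (w x) (w y) := fun x hx => by
    filter_upwards [ae_restrict_of_ae_restrict_of_subset sdiff_subset hCD,
      ae_restrict_mem (hBm.diff hV)] with y hy hyQ
    exact hdist _ hx.2 _ (hy.resolve_left hyQ.2)
  have hker : ∫⁻ z in (B ∩ w ⁻¹' C) ×ˢ (B \ w ⁻¹' C), powerKernel (m + s * p) z ≠ ∞ := by
    have hle := mul_setLIntegral_powerKernel_le_gagliardoIntegral (s := s) hp (hBm.inter hV)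
      inter_subset_left sdiff_subset hfar
    intro htop
    have hcp : c ^ p ≠ 0 := by simp [hc, hp.not_gt]
    rw [htop, ENNReal.mul_top hcp] at hle
    exact hfin.not_ge hle
  have hnull := measure_eq_zero_or_of_setLIntegral_powerKernel_ne_top volume
    (hBm.inter hV) (hBm.diff hV) (by rwa [inter_union_sdiff]) (by simpa using hsp) hker
  rcases hnull with hnull | hnull
  · right
    rw [inter_comm, ← Measure.restrict_apply hV] at hnull
    filter_upwards [hCD, measure_eq_zero_iff_ae_notMem.1 hnull] with x hx hxC
    exact hx.resolve_left hxC
  · left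
    rw [sdiff_eq, inter_comm, ← Measure.restrict_apply hV.compl] at hnull
    filter_upwards [measure_eq_zero_iff_ae_notMem.1 hnull] with x hx
    exact not_not.1 hx

end Gagliardo

section Preconnected

variable {Y : Type*} [MeasurableSpace Y] {μ : Measure Y} {q : Y → Prop}

lemma restrict_setOf_apply_eq_zero_iff {W : Set Y} (hW : MeasurableSet W) :
    μ.restrict {y | q y} W = 0 ↔ ∀ᵐ y ∂μ.restrict W, ¬q y := by
  simp only [ae_iff, not_not, Measure.restrict_apply hW, Measure.restrict_apply' hW, inter_comm]

variable [TopologicalSpace Y] [μ.IsOpenPosMeasure]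

lemma support_restrict_union_support_restrict_not :
    (μ.restrict {y | q y}).support ∪ (μ.restrict {y | ¬q y}).support = univ := by
  rw [← Measure.support_add, ← univ_subset_iff, ← Measure.support_eq_univ (μ := μ)]
  refine Measure.support_mono ?_
  simpa only [← ofPred_or, em, ofPred_true, Measure.restrict_univ] using
    Measure.restrict_union_le (μ := μ) {y | q y} {y | ¬q y}

lemma ae_or_ae_not_of_locally [HereditarilyLindelofSpace Y] [OpensMeasurableSpace Y] {Ω : Set Y}
    (hΩo : IsOpen Ω) (hΩc : IsPreconnected Ω)
    (hloc : ∀ x ∈ Ω, ∃ W, IsOpen W ∧ x ∈ W ∧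
      ((∀ᵐ y ∂μ.restrict W, q y) ∨ ∀ᵐ y ∂μ.restrict W, ¬q y)) :
    (∀ᵐ y ∂μ.restrict Ω, q y) ∨ ∀ᵐ y ∂μ.restrict Ω, ¬q y := by
  set S := (μ.restrict {y | q y}).support
  set T := (μ.restrict {y | ¬q y}).support
  have hcover : Ω ⊆ Tᶜ ∪ Sᶜ := fun x hx => by
    obtain ⟨W, hWo, hxW, hW | hW⟩ := hloc x hx
    · exact Or.inl (Measure.subset_compl_support_of_isOpen hWo
        ((restrict_setOf_apply_eq_zero_iff hWo.measurableSet).2 (by simpa using hW)) hxW)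
    · exact Or.inr (Measure.subset_compl_support_of_isOpen hWo
        ((restrict_setOf_apply_eq_zero_iff hWo.measurableSet).2 hW) hxW)
  have hdisj : Ω ∩ (Tᶜ ∩ Sᶜ) = ∅ := by
    rw [← compl_union, union_comm, support_restrict_union_support_restrict_not, compl_univ,
      inter_empty]
  rcases isPreconnected_iff_subset_of_disjoint.1 hΩc _ _ Measure.isOpen_compl_support
    Measure.isOpen_compl_support hcover hdisj with hT | hS
  · left
    have h := (restrict_setOf_apply_eq_zero_iff hΩo.measurableSet).1
      (measure_mono_null hT Measure.measure_compl_support)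
    simpa only [not_not] using h
  · right
    exact (restrict_setOf_apply_eq_zero_iff hΩo.measurableSet).1
      (measure_mono_null hS Measure.measure_compl_support)

end Preconnected

lemma areSeparated_eball_half_compl_eball {X : Type*} [PseudoEMetricSpace X] (a : X) {ε : ℝ≥0∞}
    (hε : ε ≠ 0) : AreSeparated (eball a (ε / 2)) (eball a ε)ᶜ := by
  refine ⟨ε / 2, (ENNReal.half_pos hε).ne', fun x hx y hy => ?_⟩
  by_contra! hlt
  refine hy ?_
  calc edist y a ≤ edist x y + edist x a := by rw [edist_comm x y]; exact edist_triangle y x a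
    _ < ε / 2 + ε / 2 := ENNReal.add_lt_add hlt hx
    _ = ε := ENNReal.add_halves ε

section LocallyInjective

variable {m : ℕ} {X Y : Type*} [PseudoEMetricSpace X] [MeasurableSpace X]
  [OpensMeasurableSpace X] {s p : ℝ} {B Ω : Set (EuclideanSpace ℝ (Fin m))}
  {u v : EuclideanSpace ℝ (Fin m) → X} {π : X → Y}

lemma ae_eq_or_ae_ne_of_injOn_eball (hp : 0 ≤ p) (hsp : 1 ≤ s * p) (hB : Convex ℝ B)
    (hBm : MeasurableSet B) {a : X} {ε : ℝ≥0∞} (hε : ε ≠ 0) (hπ : InjOn π (eball a ε))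
    (hu : ∀ x ∈ B, u x ∈ eball a (ε / 2)) (hv : Measurable v)
    (hfin : gagliardoIntegral s p B v < ∞)
    (hlift : ∀ᵐ x ∂volume.restrict B, π (v x) = π (u x)) :
    (∀ᵐ x ∂volume.restrict B, u x = v x) ∨ ∀ᵐ x ∂volume.restrict B, u x ≠ v x := by
  have hsub : eball a (ε / 2) ⊆ eball a ε := eball_subset_eball ENNReal.half_le_self
  have heq : ∀ᵐ x ∂volume.restrict B, v x ∈ eball a ε → u x = v x := by
    filter_upwards [hlift, ae_restrict_mem hBm] with x hx hxB hvx
    exact hπ (hsub (hu x hxB)) hvx hx.symm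
  have hjump : ∀ᵐ x ∂volume.restrict B, v x ∈ eball a (ε / 2) ∪ (eball a ε)ᶜ := by
    filter_upwards [heq, ae_restrict_mem hBm] with x hx hxB
    by_cases hvx : v x ∈ eball a ε
    · exact Or.inl (hx hvx ▸ hu x hxB)
    · exact Or.inr hvx
  rcases ae_mem_or_ae_mem_of_areSeparated hp hsp hB hBm hv hfin isOpen_eball.measurableSet
    (areSeparated_eball_half_compl_eball a hε) hjump with hnear | hfar
  · left
    filter_upwards [heq, hnear] with x hx hvx
    exact hx (hsub hvx)
  · right
    filter_upwards [hfar, ae_restrict_mem hBm] with x hvx hxB hxeq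
    exact hvx (hxeq ▸ hsub (hu x hxB))

lemma exists_isOpen_ae_eq_or_ae_ne (hp : 0 ≤ p) (hsp : 1 ≤ s * p) (hπ : IsLocallyInjective π)
    (hΩ : IsOpen Ω) (hu : ContinuousOn u Ω) (hv : Measurable v)
    (hfin : gagliardoIntegral s p Ω v < ∞)
    (hlift : ∀ᵐ x ∂volume.restrict Ω, π (v x) = π (u x))
    {x₀ : EuclideanSpace ℝ (Fin m)} (hx₀ : x₀ ∈ Ω) :
    ∃ W, IsOpen W ∧ x₀ ∈ W ∧
      ((∀ᵐ x ∂volume.restrict W, u x = v x) ∨ ∀ᵐ x ∂volume.restrict W, u x ≠ v x) := by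
  obtain ⟨U, hUo, hxU, hinj⟩ := hπ (u x₀)
  obtain ⟨ε, hε, hεU⟩ := EMetric.isOpen_iff.1 hUo _ hxU
  have hnear : Ω ∩ u ⁻¹' eball (u x₀) (ε / 2) ∈ 𝓝 x₀ :=
    inter_mem (hΩ.mem_nhds hx₀) ((hu.continuousAt (hΩ.mem_nhds hx₀)).preimage_mem_nhds
      (eball_mem_nhds _ (ENNReal.half_pos hε.ne')))
  obtain ⟨r, hr, hball⟩ := Metric.mem_nhds_iff.1 hnear
  have hballΩ : ball x₀ r ⊆ Ω := fun x hx => (hball hx).1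
  exact ⟨ball x₀ r, isOpen_ball, mem_ball_self hr,
    ae_eq_or_ae_ne_of_injOn_eball hp hsp (convex_ball x₀ r) measurableSet_ball hε.ne'
      (hinj.mono hεU) (fun x hx => (hball hx).2) hv
      ((gagliardoIntegral_mono_set hballΩ).trans_lt hfin)
      (ae_restrict_of_ae_restrict_of_subset hballΩ hlift)⟩

theorem sobolev_lifting_differs_ae_general (hp : 0 ≤ p) (hsp : 1 ≤ s * p)
    (hπ : IsLocallyInjective π) (hΩo : IsOpen Ω) (hΩc : IsPreconnected Ω)
    (hu : ContinuousOn u Ω) (huinf : gagliardoIntegral s p Ω u = ∞)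
    (hv : Measurable v) (hvfin : gagliardoIntegral s p Ω v < ∞)
    (hlift : ∀ᵐ x ∂volume.restrict Ω, π (v x) = π (u x)) :
    ∀ᵐ x ∂volume.restrict Ω, u x ≠ v x := by
  refine (ae_or_ae_not_of_locally hΩo hΩc fun x hx =>
    exists_isOpen_ae_eq_or_ae_ne hp hsp hπ hΩo hu hv hvfin hlift hx).resolve_left fun heq => ?_
  exact hvfin.ne ((gagliardoIntegral_congr_ae heq).symm.trans huinf)

end LocallyInjective

/-- **Any Sobolev lifting differs a.e. from a bad continuous lifting, for general
coverings.** For `sp ≥ 1`, let `π : Ñ → N` be a covering map between metric spaces which is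
nonexpansive and a local isometry. Let `Ω ⊆ ℝ^m` be a connected open set and `ũ : Ω → Ñ` a
continuous map in `W^{s,p}_loc(Ω,Ñ)` with infinite Gagliardo double integral on `Ω`. If `ṽ`
is Borel measurable with finite Gagliardo double integral on `Ω` and `π ∘ ṽ = π ∘ ũ` a.e.
on `Ω`, then `ũ ≠ ṽ` a.e. on `Ω`. -/
theorem sobolev_lifting_differs_ae (s p : ℝ) (m : ℕ) (hs0 : 0 < s)
    (hs1 : s < 1) (hp1 : 1 ≤ p) (hsp : 1 ≤ s * p) (hm : 1 ≤ m)
    {Ntl N : Type*} [MetricSpace Ntl] [MetricSpace N]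
    [MeasurableSpace Ntl] [BorelSpace Ntl]
    (π : Ntl → N) (hcov : IsCoveringMap π)
    (hnonexp : ∀ a b : Ntl, dist (π a) (π b) ≤ dist a b)
    (hlociso : ∀ a : Ntl, ∃ ε > 0, ∀ x ∈ ball a ε, ∀ y ∈ ball a ε,
      dist (π x) (π y) = dist x y)
    (Ω : Set (EuclideanSpace ℝ (Fin m))) (hΩo : IsOpen Ω) (hΩc : IsConnected Ω)
    (ut vt : EuclideanSpace ℝ (Fin m) → Ntl)
    (hutc : ContinuousOn ut Ω) (hutloc : MemWsplocOn s p Ω ut)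
    (hutinf : gagliardoIntegral s p Ω ut = ∞)
    (hvtm : Measurable vt) (hvtfin : gagliardoIntegral s p Ω vt < ∞)
    (hπ : ∀ᵐ x ∂(volume.restrict Ω), π (vt x) = π (ut x)) :
    ∀ᵐ x ∂(volume.restrict Ω), ut x ≠ vt x :=
  sobolev_lifting_differs_ae_general (by linarith) hsp hcov.isLocalHomeomorph.isLocallyInjective
    hΩo hΩc.isPreconnected hutc hutinf hvtm hvtfin hπ
end

section
/- Let m ≥ 2, 0<s<1 and p = 1/s. Let (Ñ, d_Ñ) and (N, d_N) be metric spaces and let π : Ñ → N be nonexpansive and an isometry at scale ρ>0 (d_N(π(a),π(b)) ≤ d_Ñ(a,b) for all a,b, with equality whenever d_Ñ(a,b) ≤ ρ). Let b̃, b̃' ∈ Ñ satisfy b̃ ≠ b̃' and π(b̃) = π(b̃'), and assume there is a Lipschitz path γ : ℝ → Ñ with γ(t) = b̃ for t ≤ 0 and γ(t) = b̃' for t ≥ 1. Then for every r > 0, x₀ ∈ ℝ^m, ε > 0 and M > 0 there exists a continuous map ũ : ℝ^m → Ñ such that: (i) ũ(x) = b̃ whenever |x - x₀| ≥ r; (ii)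 ũ = b̃' on a neighborhood of x₀; (iii) ∫_{B_r(x₀)}∫_{B_r(x₀)} d_Ñ(ũ(x),ũ(y))^p/|x-y|^{m+1} dx dy > M; (iv) ∫_{ℝ^m}∫_{ℝ^m} d_N(π(ũ(x)),π(ũ(y)))^p/|x-y|^{m+1} dx dy < ε. -/
open MeasureTheory Set ENNReal Metric

/-!
Let `u` equal `b'` on the ball of radius `R` about `x₀` and `b` outside the ball of radius `R + δ`,
and run along the path `γ` radially in the layer between. Since `π b = π b'`, the increments of
`π ∘ u` vanish off the layer, which has volume at most a constant times `δ * R ^ (m - 1)`. There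
they are bounded by a constant times `min 1 (|x - y| / δ)`, and rescaling by `δ` shows that each
point of the layer contributes at most a constant times `1 / δ`. So the energy of `π ∘ u` is at
most a constant times `R ^ (m - 1)`, uniformly in `δ ≤ R`, and is small for small `R` because
`m ≥ 2`.

With `R` now fixed, `u` jumps between two distinct points across the sphere of radius `R` as
`δ → 0`, and the kernel `|x - y| ^ (-(m + 1))` is not integrable across a hypersurface: a point at
distance `t ≥ δ` inside the sphere contributes at least a constant times `1 / t`, and
`∫ dt / t = ∞`. So the energy of `u` on the ball tends to infinity.
-/

open Filter Module Topology
open scoped NNReal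

section GagliardoEnergy

variable {E X : Type*} [PseudoEMetricSpace E] [MeasurableSpace E] [PseudoEMetricSpace X]

/-- The double integral of `d(w x, w y) ^ p / d(x, y) ^ q` over `S × S`. On an `m`-dimensional space
with `q = m + s * p` it is the `p`-th power of the Gagliardo seminorm of `W^{s,p}(S)`; keeping `q`
as a parameter of its own makes the definition independent of a dimension. For `p > 0` the diagonal
`x = y` contributes nothing, since `0 / 0 = 0`. -/
noncomputable def gagliardoEnergy (μ : Measure E) (p q : ℝ) (w : E → X) (S : Set E) : ℝ≥0∞ :=
  ∫⁻ x in S, ∫⁻ y in S, edist (w x) (w y) ^ p / edist x y ^ q ∂μ ∂μ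

variable {μ : Measure E} {p q : ℝ} {w : E → X}

theorem measure_mul_le_setLIntegral_edist_rpow_inv {x : E} {A : Set E} {T : ℝ≥0∞}
    (hq : 0 ≤ q) (hA : MeasurableSet A) (hxA : ∀ y ∈ A, edist x y ≤ T) :
    μ A * (T ^ q)⁻¹ ≤ ∫⁻ y in A, (edist x y ^ q)⁻¹ ∂μ := by
  rw [mul_comm, ← setLIntegral_const]
  refine setLIntegral_mono' hA fun y hy => ?_
  gcongr
  exact hxA y hy

theorem edist_rpow_mul_lintegral_le_gagliardoEnergy {A B S : Set E} {a b : X} (hAS : A ⊆ S)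
    (hBS : B ⊆ S) (hA : MeasurableSet A) (hB : MeasurableSet B) (hwA : ∀ x ∈ A, w x = a)
    (hwB : ∀ y ∈ B, w y = b) (hab : edist a b ^ p ≠ ∞) :
    edist a b ^ p * ∫⁻ x in A, ∫⁻ y in B, (edist x y ^ q)⁻¹ ∂μ ∂μ ≤ gagliardoEnergy μ p q w S := by
  calc edist a b ^ p * ∫⁻ x in A, ∫⁻ y in B, (edist x y ^ q)⁻¹ ∂μ ∂μ
    _ = ∫⁻ x in A, ∫⁻ y in B, edist a b ^ p / edist x y ^ q ∂μ ∂μ := by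
        simp only [div_eq_mul_inv, lintegral_const_mul' _ _ hab]
    _ = ∫⁻ x in A, ∫⁻ y in B, edist (w x) (w y) ^ p / edist x y ^ q ∂μ ∂μ :=
        setLIntegral_congr_fun hA fun x hx => setLIntegral_congr_fun hB fun y hy => by
          simp only [hwA x hx, hwB y hy]
    _ ≤ gagliardoEnergy μ p q w S :=
        (lintegral_mono fun _ => lintegral_mono_set hBS).trans (lintegral_mono_set hAS)

end GagliardoEnergy

section Convolution

variable {G : Type*} [AddCommGroup G] [MeasurableSpace G] [MeasurableAdd₂ G] [MeasurableNeg G]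
  {μ : Measure G} [SFinite μ] [μ.IsAddLeftInvariant] [μ.IsNegInvariant]

theorem lintegral_lintegral_le_two_mul_of_le_sub {F : G → G → ℝ≥0∞} {g : G → ℝ≥0∞} {L : Set G}
    (hg : Measurable g) (hL : MeasurableSet L) (hFg : ∀ x y, F x y ≤ g (y - x))
    (hF : ∀ x ∉ L, ∀ y ∉ L, F x y = 0) :
    ∫⁻ x, ∫⁻ y, F x y ∂μ ∂μ ≤ 2 * (μ L * ∫⁻ h, g h ∂μ) := by
  set χ : G → ℝ≥0∞ := L.indicator 1
  have hχ : Measurable χ := measurable_one.indicator hL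
  have hχL : ∫⁻ x, χ x ∂μ = μ L := lintegral_indicator_one hL
  have hFχ (x y : G) : F x y ≤ χ x * g (y - x) + χ y * g (y - x) := by
    by_cases hx : x ∈ L
    · simpa [χ, hx] using (hFg x y).trans le_self_add
    by_cases hy : y ∈ L
    · simpa [χ, hy] using (hFg x y).trans le_add_self
    · simp [hF x hx y hy]
  have hfst : ∫⁻ x, ∫⁻ y, χ x * g (y - x) ∂μ ∂μ = μ L * ∫⁻ h, g h ∂μ := by
    rw [← hχL, ← lintegral_mul_const _ hχ]
    congr with x
    rw [lintegral_const_mul _ (by fun_prop), lintegral_sub_right_eq_self]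
  have hsnd : ∫⁻ x, ∫⁻ y, χ y * g (y - x) ∂μ ∂μ = μ L * ∫⁻ h, g h ∂μ := by
    rw [lintegral_lintegral_swap (by fun_prop), ← hχL, ← lintegral_mul_const _ hχ]
    congr with y
    rw [lintegral_const_mul _ (by fun_prop), lintegral_sub_left_eq_self]
  calc ∫⁻ x, ∫⁻ y, F x y ∂μ ∂μ
    _ ≤ ∫⁻ x, ∫⁻ y, (χ x * g (y - x) + χ y * g (y - x)) ∂μ ∂μ :=
        lintegral_mono fun x => lintegral_mono fun y => hFχ x y
    _ = (∫⁻ x, ∫⁻ y, χ x * g (y - x) ∂μ ∂μ) + ∫⁻ x, ∫⁻ y, χ y * g (y - x) ∂μ ∂μ := by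
        rw [← lintegral_add_left (Measurable.lintegral_prod_right' (f := fun z : G × G =>
          χ z.1 * g (z.2 - z.1)) (by fun_prop))]
        congr with x
        exact lintegral_add_left (by fun_prop) _
    _ = 2 * (μ L * ∫⁻ h, g h ∂μ) := by rw [hfst, hsnd, two_mul]

end Convolution

section AddHaar

variable {E : Type*} [NormedAddCommGroup E] [NormedSpace ℝ E] [FiniteDimensional ℝ E]
  [MeasurableSpace E] [BorelSpace E] (μ : Measure E) [μ.IsAddHaarMeasure]

theorem lintegral_comp_smul_addHaar {g : E → ℝ≥0∞} (hg : Measurable g) {c : ℝ} (hc : c ≠ 0) :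
    ∫⁻ x, g (c • x) ∂μ = ENNReal.ofReal |(c ^ finrank ℝ E)⁻¹| * ∫⁻ x, g x ∂μ := by
  rw [← lintegral_map hg (measurable_const_smul c), Measure.map_addHaar_smul μ hc,
    lintegral_smul_measure, smul_eq_mul]

/-- The integral over the whole space of the kernel `‖h‖ ^ (-(m + a))`, with `m` the dimension,
truncated near the origin by the factor `min 1 ‖h‖ ^ p`. It is the constant in the energy bound for
Lipschitz maps of bounded range, `a` playing the role of `s * p`. -/
noncomputable def truncatedKernelIntegral (p a : ℝ) : ℝ≥0∞ :=
  ∫⁻ h, min 1 ‖h‖ₑ ^ p / ‖h‖ₑ ^ (finrank ℝ E + a) ∂μ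

variable {μ} in
theorem integrable_min_one_norm_rpow_mul_norm_rpow_neg [Nontrivial E] {p a : ℝ} (ha : 0 < a)
    (hap : a < p) :
    Integrable (fun h : E => min 1 ‖h‖ ^ p * ‖h‖ ^ (-(finrank ℝ E + a))) μ := by
  set f : E → ℝ := fun h => min 1 ‖h‖ ^ p * ‖h‖ ^ (-(finrank ℝ E + a))
  have hf : AEStronglyMeasurable f μ := by fun_prop
  have hfnorm (h : E) : ‖f h‖ = f h := Real.norm_of_nonneg (by positivity)
  have hball : IntegrableOn f (ball 0 1) μ := by
    refine integrableOn_ball_of_norm_le_rpow (C := 1) (α := finrank ℝ E + a - p) finrank_pos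
      (by linarith) (ae_restrict_of_forall_mem measurableSet_ball fun h hh => ?_) hf
    rcases eq_or_ne h 0 with rfl | h0
    · simp [f, Real.zero_rpow (ha.trans hap).ne', Real.zero_rpow_nonneg]
    rw [hfnorm, one_mul]
    simp only [f]
    rw [min_eq_right (mem_ball_zero_iff.1 hh).le, ← Real.rpow_add (norm_pos_iff.2 h0)]
    exact le_of_eq (by congr 1; ring)
  have hcompl : IntegrableOn f (ball 0 1)ᶜ μ := by
    have hdecay : Integrable (fun h : E => 2 ^ (finrank ℝ E + a) *
        (1 + ‖h‖) ^ (-(finrank ℝ E + a))) μ :=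
      (integrable_one_add_norm (by linarith)).const_mul _
    refine hdecay.integrableOn.mono' hf.restrict
      (ae_restrict_of_forall_mem measurableSet_ball.compl fun h hh => ?_)
    have hh1 : 1 ≤ ‖h‖ := by simpa using hh
    calc ‖f h‖ = (2 : ℝ) ^ (finrank ℝ E + a) * (2 * ‖h‖) ^ (-(finrank ℝ E + a)) := by
          rw [hfnorm, Real.mul_rpow (by positivity) (by positivity), ← mul_assoc,
            ← Real.rpow_add two_pos]
          simp [f, hh1]
      _ ≤ (2 : ℝ) ^ (finrank ℝ E + a) * (1 + ‖h‖) ^ (-(finrank ℝ E + a)) := by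
          gcongr 2 ^ _ * ?_
          exact Real.rpow_le_rpow_of_nonpos (by positivity) (by linarith)
            (neg_nonpos.2 (by positivity))
  simpa using hball.union hcompl

theorem truncatedKernelIntegral_ne_top [Nontrivial E] {p a : ℝ} (ha : 0 < a) (hap : a < p) :
    truncatedKernelIntegral μ p a ≠ ∞ := by
  have hfin := (integrable_min_one_norm_rpow_mul_norm_rpow_neg (μ := μ) ha hap).2
  refine (hfin.trans_eq' (lintegral_congr fun h => ?_)).ne
  rcases eq_or_ne h 0 with rfl | h0
  · simp [ha.trans hap, (ha.trans hap).ne']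
  rw [enorm_mul, Real.enorm_rpow_of_nonneg (by positivity) (ha.trans hap).le,
    Real.enorm_of_nonneg (by positivity), Real.enorm_of_nonneg (by positivity),
    ← ENNReal.ofReal_rpow_of_pos (norm_pos_iff.2 h0), ENNReal.ofReal_min, ofReal_one, ofReal_norm,
    ENNReal.rpow_neg, div_eq_mul_inv]

theorem lintegral_min_one_enorm_div_rpow {p a δ : ℝ} (ha : 0 ≤ a) (hδ : 0 < δ) :
    ∫⁻ h, min 1 (‖h‖ₑ / ENNReal.ofReal δ) ^ p / ‖h‖ₑ ^ (finrank ℝ E + a) ∂μ =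
      truncatedKernelIntegral μ p a / ENNReal.ofReal δ ^ a := by
  set q : ℝ := finrank ℝ E + a
  have hq : 0 ≤ q := by positivity
  set g : E → ℝ≥0∞ := fun h => min 1 ‖h‖ₑ ^ p / ‖h‖ₑ ^ q
  have hg : Measurable g := by fun_prop
  set D : ℝ≥0∞ := ENNReal.ofReal δ
  have hD0 : D ≠ 0 := by simpa [D]
  have hDtop : D ≠ ∞ := ENNReal.ofReal_ne_top
  have hDpow0 (b : ℝ) : D ^ b ≠ 0 := by simp [ENNReal.rpow_eq_zero_iff, hD0, hDtop]
  have hDpowtop (b : ℝ) : D ^ b ≠ ∞ := by simp [ENNReal.rpow_eq_top_iff, hD0, hDtop]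
  have hscale (h : E) : min 1 (‖h‖ₑ / D) ^ p / ‖h‖ₑ ^ q = (D ^ q)⁻¹ * g (δ⁻¹ • h) := by
    have hnorm : ‖δ⁻¹ • h‖ₑ = ‖h‖ₑ / D := by
      rw [enorm_smul, mul_comm, div_eq_mul_inv, Real.enorm_of_nonneg (by positivity),
        ENNReal.ofReal_inv_of_pos hδ]
    simp only [g, hnorm]
    rw [div_eq_mul_inv _ ((‖h‖ₑ / D) ^ q), ENNReal.div_rpow_of_nonneg _ _ hq,
      ENNReal.inv_div (.inl (hDpowtop q)) (.inl (hDpow0 q)), mul_left_comm, ← mul_div_assoc,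
      ENNReal.inv_mul_cancel (hDpow0 q) (hDpowtop q), one_div, div_eq_mul_inv]
  calc ∫⁻ h, min 1 (‖h‖ₑ / D) ^ p / ‖h‖ₑ ^ q ∂μ
    _ = (D ^ q)⁻¹ * (D ^ finrank ℝ E * ∫⁻ h, g h ∂μ) := by
        simp only [hscale]
        rw [lintegral_const_mul _ (by fun_prop), lintegral_comp_smul_addHaar μ hg (by positivity),
          inv_pow, inv_inv, abs_of_pos (by positivity), ENNReal.ofReal_pow hδ.le]
    _ = (∫⁻ h, g h ∂μ) / D ^ a := by
        rw [ENNReal.rpow_add _ _ hD0 hDtop, ← ENNReal.rpow_natCast,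
          ENNReal.mul_inv (.inl (hDpow0 _)) (.inl (hDpowtop _)), mul_mul_mul_comm,
          ENNReal.inv_mul_cancel (hDpow0 _) (hDpowtop _), one_mul, mul_comm, div_eq_mul_inv]

theorem gagliardoEnergy_univ_le {X : Type*} [PseudoEMetricSpace X] {w : E → X} {L : Set E}
    {p a δ : ℝ} {C : ℝ≥0} (hp : 0 < p) (ha : 0 ≤ a) (hδ : 0 < δ) (hL : MeasurableSet L)
    (hw : ∀ x y, edist (w x) (w y) ≤ C * min 1 (edist x y / ENNReal.ofReal δ))
    (hwL : ∀ x ∉ L, ∀ y ∉ L, edist (w x) (w y) = 0) :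
    gagliardoEnergy μ p (finrank ℝ E + a) w univ ≤
      2 * (μ L * (C ^ p * (truncatedKernelIntegral μ p a / ENNReal.ofReal δ ^ a))) := by
  have hCp : (C : ℝ≥0∞) ^ p ≠ ∞ := ENNReal.rpow_ne_top_of_nonneg hp.le coe_ne_top
  rw [← lintegral_min_one_enorm_div_rpow μ ha hδ, ← lintegral_const_mul' _ _ hCp]
  simp only [gagliardoEnergy, Measure.restrict_univ]
  refine lintegral_lintegral_le_two_mul_of_le_sub (by fun_prop) hL (fun x y => ?_)
    fun x hx y hy => by simp [hwL x hx y hy, hp]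
  rw [← mul_div_assoc, ← ENNReal.mul_rpow_of_nonneg _ _ hp.le, ← edist_eq_enorm_sub, edist_comm y]
  gcongr
  exact hw x y

theorem measure_closedBall_diff_closedBall_le (x : E) {R δ : ℝ} (hR : 0 ≤ R) (hδ : 0 ≤ δ) :
    μ (closedBall x (R + δ) \ closedBall x R) ≤
      ENNReal.ofReal (δ * (finrank ℝ E * (R + δ) ^ (finrank ℝ E - 1))) * μ (ball 0 1) := by
  rw [measure_sdiff (closedBall_subset_closedBall (by linarith))
      measurableSet_closedBall.nullMeasurableSet measure_closedBall_lt_top.ne,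
    Measure.addHaar_closedBall _ _ (by positivity), Measure.addHaar_closedBall _ _ hR,
    ← ENNReal.sub_mul fun _ _ => measure_ball_lt_top.ne, ← ENNReal.ofReal_sub _ (by positivity)]
  gcongr
  calc (R + δ) ^ finrank ℝ E - R ^ finrank ℝ E
    _ ≤ |R + δ - R| * finrank ℝ E * max |R + δ| |R| ^ (finrank ℝ E - 1) :=
        (le_abs_self _).trans (abs_pow_sub_pow_le _ _ _)
    _ = δ * (finrank ℝ E * (R + δ) ^ (finrank ℝ E - 1)) := by
        rw [add_sub_cancel_left, abs_of_nonneg hδ, abs_of_nonneg hR, abs_of_nonneg (by positivity),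
          max_eq_left (by linarith), mul_assoc]

theorem exists_dist_eq_add_and_dist_eq {E : Type*} [NormedAddCommGroup E] [NormedSpace ℝ E]
    [Nontrivial E] (x x₀ : E) {t : ℝ} (ht : 0 ≤ t) :
    ∃ z, dist z x₀ = dist x x₀ + t ∧ dist x z = t := by
  rcases eq_or_ne x x₀ with rfl | hx
  · obtain ⟨v, hv⟩ := exists_norm_eq E ht
    exact ⟨x + v, by simp [hv], by simp [hv]⟩
  · have hn : 0 < ‖x - x₀‖ := norm_pos_iff.2 (sub_ne_zero.2 hx)
    set v := (t / ‖x - x₀‖) • (x - x₀)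
    have hv : ‖v‖ = t := by
      simp [v, norm_smul, abs_of_nonneg ht, hn.ne']
    have hray : SameRay ℝ (x - x₀) v := SameRay.sameRay_nonneg_smul_right _ (by positivity)
    refine ⟨x + v, ?_, by simp [hv]⟩
    rw [dist_eq_norm, dist_eq_norm, add_sub_right_comm, hray.norm_add, hv]

theorem le_lintegral_shell_edist_rpow_inv [Nontrivial E] {x x₀ : E} {R r t δ a : ℝ} (ha : 0 ≤ a)
    (ht : 0 < t) (hδt : δ ≤ t) (htr : R + 3 * t ≤ r) (hx : dist x x₀ = R - t) :
    μ (ball 0 1) / 4 ^ (finrank ℝ E + a) * (ENNReal.ofReal t ^ a)⁻¹ ≤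
      ∫⁻ y in ball x₀ r \ ball x₀ (R + δ), (edist x y ^ (finrank ℝ E + a))⁻¹ ∂μ := by
  set q : ℝ := finrank ℝ E + a
  have hq : 0 ≤ q := by positivity
  set T := ENNReal.ofReal t
  have hT : T ≠ 0 := by simpa [T]
  have hTtop : T ≠ ∞ := ENNReal.ofReal_ne_top
  obtain ⟨z, hzx₀, hxz⟩ := exists_dist_eq_add_and_dist_eq x x₀ (t := 3 * t) (by positivity)
  have hzshell : ball z t ⊆ ball x₀ r \ ball x₀ (R + δ) := fun y hy => by
    have hy : dist y z < t := hy
    have h₁ := dist_triangle y z x₀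
    have h₂ := dist_triangle_left z x₀ y
    simp only [Set.mem_sdiff, mem_ball, not_lt]
    constructor <;> linarith
  have hxy : ∀ y ∈ ball z t, edist x y ≤ 4 * T := fun y hy => by
    have hy : dist z y < t := mem_ball'.1 hy
    rw [edist_dist, ← ENNReal.ofReal_ofNat, ← ENNReal.ofReal_mul (by positivity)]
    exact ENNReal.ofReal_le_ofReal (by linarith [dist_triangle x z y])
  calc μ (ball 0 1) / 4 ^ q * (T ^ a)⁻¹
    _ = T ^ finrank ℝ E * (T ^ finrank ℝ E)⁻¹ * (μ (ball 0 1) / 4 ^ q * (T ^ a)⁻¹) := by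
        rw [ENNReal.mul_inv_cancel (by positivity) (by finiteness), one_mul]
    _ = μ (ball z t) * ((4 * T) ^ q)⁻¹ := by
        rw [Measure.addHaar_ball _ _ ht.le, ENNReal.ofReal_pow ht.le,
          ENNReal.mul_rpow_of_nonneg _ _ hq, ENNReal.rpow_add _ _ hT hTtop, ENNReal.rpow_natCast,
          ENNReal.mul_inv (.inr (by finiteness)) (.inr (by positivity)),
          ENNReal.mul_inv (.inl (by positivity)) (.inl (by finiteness)), div_eq_mul_inv]
        ring
    _ ≤ ∫⁻ y in ball z t, (edist x y ^ q)⁻¹ ∂μ :=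
        measure_mul_le_setLIntegral_edist_rpow_inv hq measurableSet_ball hxy
    _ ≤ ∫⁻ y in ball x₀ r \ ball x₀ (R + δ), (edist x y ^ q)⁻¹ ∂μ := lintegral_mono_set hzshell

theorem not_integrableOn_Ioo_sub_rpow_neg {b c a : ℝ} (hcb : c < b) (ha : 1 ≤ a) :
    ¬IntegrableOn (fun t : ℝ => (b - t) ^ (-a)) (Ioo c b) := by
  intro h
  have hreflect := ((intervalIntegrable_iff_integrableOn_Ioo_of_le hcb.le).2 h).comp_sub_left b
  rw [sub_self] at hreflect
  have hpow := (intervalIntegrable_iff_integrableOn_Ioo_of_le (sub_nonneg.2 hcb.le)).1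
    hreflect.symm
  simp only [_root_.sub_sub_cancel] at hpow
  rw [intervalIntegral.integrableOn_Ioo_rpow_iff (sub_pos.2 hcb)] at hpow
  linarith

theorem not_integrableOn_ball_sub_norm_rpow_neg [Nontrivial E] {R a : ℝ} (hR : 0 < R)
    (ha : 1 ≤ a) : ¬IntegrableOn (fun x : E => (R - ‖x‖) ^ (-a)) (ball 0 R) μ := by
  intro hball
  have hradial : IntegrableOn (fun t : ℝ => t ^ (finrank ℝ E - 1) * (R - t) ^ (-a)) (Ioo 0 R) :=
    (integrableOn_fun_norm_addHaar μ (f := fun t : ℝ => (R - t) ^ (-a))).1 hball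
  refine not_integrableOn_Ioo_sub_rpow_neg (half_lt_self hR) ha ?_
  refine ((hradial.mono_set (Ioo_subset_Ioo_left (half_pos hR).le)).const_mul
    (((R / 2) ^ (finrank ℝ E - 1))⁻¹)).mono'
    (by fun_prop : Measurable fun t : ℝ => (R - t) ^ (-a)).aestronglyMeasurable
    (ae_restrict_of_forall_mem measurableSet_Ioo fun t ht => ?_)
  have hweight : (R / 2) ^ (finrank ℝ E - 1) ≤ t ^ (finrank ℝ E - 1) :=
    pow_le_pow_left₀ (by positivity) ht.1.le _
  have hnonneg : 0 ≤ (R - t) ^ (-a) := Real.rpow_nonneg (sub_nonneg.2 ht.2.le) _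
  rw [Real.norm_of_nonneg hnonneg, ← mul_assoc]
  refine le_mul_of_one_le_left hnonneg ?_
  rwa [inv_mul_eq_div, one_le_div (by positivity)]

theorem lintegral_ball_sub_dist_rpow_inv_eq_top [Nontrivial E] (x₀ : E) {R a : ℝ} (hR : 0 < R)
    (ha : 1 ≤ a) : ∫⁻ x in ball x₀ R, (ENNReal.ofReal (R - dist x x₀) ^ a)⁻¹ ∂μ = ∞ := by
  have htranslate := (measurePreserving_sub_right μ x₀).setLIntegral_comp_preimage
    (s := ball 0 R) measurableSet_ball
    (f := fun x : E => (ENNReal.ofReal (R - ‖x‖) ^ a)⁻¹) (by fun_prop)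
  have hpre : (fun x => x - x₀) ⁻¹' ball 0 R = ball x₀ R := by
    ext x; simp [dist_eq_norm]
  simp only [hpre, ← dist_eq_norm] at htranslate
  rw [htranslate]
  by_contra hfin
  refine not_integrableOn_ball_sub_norm_rpow_neg μ hR ha
    ⟨(by fun_prop : Measurable fun x : E => (R - ‖x‖) ^ (-a)).aestronglyMeasurable, ?_⟩
  refine (lt_top_iff_ne_top.2 hfin).trans_eq' (setLIntegral_congr_fun measurableSet_ball
    fun x hx => ?_)
  have hpos : 0 < R - ‖x‖ := sub_pos.2 (mem_ball_zero_iff.1 hx)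
  simp only
  rw [Real.enorm_of_nonneg (by positivity), ← ENNReal.ofReal_rpow_of_pos hpos, ENNReal.rpow_neg]

theorem tendsto_lintegral_closedBall_sub_dist_rpow_inv [Nontrivial E] (x₀ : E) {R a : ℝ}
    (hR : 0 < R) (ha : 1 ≤ a) :
    Tendsto (fun δ => ∫⁻ x in closedBall x₀ (R - δ), (ENNReal.ofReal (R - dist x x₀) ^ a)⁻¹ ∂μ)
      (𝓝[>] 0) (𝓝 ∞) := by
  have hmem (x : E) (hx : x ∈ ball x₀ R) : ∀ᶠ δ in 𝓝[>] (0 : ℝ), x ∈ closedBall x₀ (R - δ) := by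
    filter_upwards [mem_nhdsWithin_of_mem_nhds (Iio_mem_nhds (sub_pos.2 (mem_ball.1 hx)))]
      with δ (hδ : δ < R - dist x x₀)
    exact mem_closedBall.2 (by linarith)
  have hcover : AECover (μ.restrict (ball x₀ R)) (𝓝[>] (0 : ℝ)) fun δ => closedBall x₀ (R - δ) :=
    ⟨ae_restrict_of_forall_mem measurableSet_ball hmem, fun _ => measurableSet_closedBall⟩
  have hlim := hcover.lintegral_tendsto_of_countably_generated
    (f := fun x => (ENNReal.ofReal (R - dist x x₀) ^ a)⁻¹) (by fun_prop)
  rw [lintegral_ball_sub_dist_rpow_inv_eq_top μ x₀ hR ha] at hlim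
  refine hlim.congr' (eventually_nhdsWithin_of_forall fun δ (hδ : 0 < δ) => ?_)
  rw [Measure.restrict_restrict measurableSet_closedBall,
    inter_eq_left.2 (closedBall_subset_ball (by linarith))]

theorem tendsto_lintegral_ball_shell_edist_rpow_inv [Nontrivial E] (x₀ : E) {R r a : ℝ}
    (hR : 0 < R) (hRr : 4 * R ≤ r) (ha : 1 ≤ a) :
    Tendsto (fun δ => ∫⁻ x in closedBall x₀ R, ∫⁻ y in ball x₀ r \ ball x₀ (R + δ),
      (edist x y ^ (finrank ℝ E + a))⁻¹ ∂μ ∂μ) (𝓝[>] 0) (𝓝 ∞) := by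
  have hq : 0 ≤ finrank ℝ E + a := by positivity
  set c : ℝ≥0∞ := μ (ball 0 1) / 4 ^ (finrank ℝ E + a)
  have hc : c ≠ 0 := ENNReal.div_ne_zero.2
    ⟨(measure_ball_pos μ 0 one_pos).ne', ENNReal.rpow_ne_top_of_nonneg hq (by simp)⟩
  have hctop : c ≠ ∞ := ENNReal.div_ne_top measure_ball_lt_top.ne (by simp)
  have hlim := ENNReal.Tendsto.const_mul (a := c)
    (tendsto_lintegral_closedBall_sub_dist_rpow_inv μ x₀ hR ha) (.inl ENNReal.top_ne_zero)
  rw [ENNReal.mul_top hc] at hlim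
  refine tendsto_nhds_top_mono hlim (eventually_nhdsWithin_of_forall fun δ (hδ : 0 < δ) => ?_)
  simp only
  rw [← lintegral_const_mul' _ _ hctop]
  refine (setLIntegral_mono' measurableSet_closedBall fun x hx => ?_).trans
    (lintegral_mono_set (closedBall_subset_closedBall (by linarith)))
  have hx : dist x x₀ ≤ R - δ := hx
  have hx₀ : 0 ≤ dist x x₀ := dist_nonneg
  exact le_lintegral_shell_edist_rpow_inv μ (by linarith) (by linarith) (by linarith)
    (by linarith) (by linarith)

end AddHaar

section RadialTransition

variable {E X : Type*} [PseudoMetricSpace E]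

/-- The path `γ` run radially across the layer `R ≤ dist x x₀ ≤ R + δ`, from time `1` at the inner
sphere down to time `0` at the outer one. For a path that is constant before time `0` and after
time `1` this gives a map that is constant on the inner ball and off the outer one. -/
noncomputable def radialTransition (γ : ℝ → X) (x₀ : E) (R δ : ℝ) (x : E) : X :=
  γ (1 + (R - dist x x₀) / δ)

variable {γ : ℝ → X} {b b' : X} {x x₀ : E} {R δ : ℝ}

theorem radialTransition_of_dist_le (hγ1 : ∀ t, 1 ≤ t → γ t = b') (hδ : 0 ≤ δ)
    (hx : dist x x₀ ≤ R) : radialTransition γ x₀ R δ x = b' :=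
  hγ1 _ (le_add_of_nonneg_right (div_nonneg (sub_nonneg.2 hx) hδ))

theorem radialTransition_of_le_dist (hγ0 : ∀ t ≤ 0, γ t = b) (hδ : 0 < δ)
    (hx : R + δ ≤ dist x x₀) : radialTransition γ x₀ R δ x = b := by
  refine hγ0 _ ?_
  rw [← div_self hδ.ne', ← add_div]
  exact div_nonpos_of_nonpos_of_nonneg (by linarith) hδ.le

variable [PseudoEMetricSpace X] {K : ℝ≥0}

theorem edist_le_mul_min_one_edist_of_lipschitzWith (hγ : LipschitzWith K γ)
    (hγ0 : ∀ t ≤ 0, γ t = b) (hγ1 : ∀ t, 1 ≤ t → γ t = b') (s t : ℝ) :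
    edist (γ s) (γ t) ≤ K * min 1 (edist s t) := by
  set clamp : ℝ → Icc (0 : ℝ) 1 := projIcc 0 1 zero_le_one
  have hclamp (t : ℝ) : γ t = γ (clamp t) := by
    rcases le_total t 0 with h0 | h0
    · rw [hγ0 t h0, show clamp t = _ from projIcc_of_le_left _ h0, hγ0 _ le_rfl]
    rcases le_total t 1 with h1 | h1
    · rw [show clamp t = _ from projIcc_of_mem _ ⟨h0, h1⟩]
    · rw [hγ1 t h1, show clamp t = _ from projIcc_of_right_le _ h1, hγ1 _ le_rfl]
  rw [hclamp s, hclamp t]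
  refine (hγ _ _).trans (mul_le_mul_right (le_min ?_ ?_) _)
  · rw [edist_dist, ENNReal.ofReal_le_one]
    simpa using Real.dist_le_of_mem_Icc (clamp s).2 (clamp t).2
  · simpa [Subtype.edist_eq] using LipschitzWith.projIcc (zero_le_one (α := ℝ)) s t

theorem continuous_radialTransition (hγ : Continuous γ) :
    Continuous (radialTransition γ x₀ R δ) := by
  unfold radialTransition
  fun_prop

theorem edist_radialTransition_le (hγ : LipschitzWith K γ) (hγ0 : ∀ t ≤ 0, γ t = b)
    (hγ1 : ∀ t, 1 ≤ t → γ t = b') (hδ : 0 < δ) (x y : E) :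
    edist (radialTransition γ x₀ R δ x) (radialTransition γ x₀ R δ y) ≤
      K * min 1 (edist x y / ENNReal.ofReal δ) := by
  refine (edist_le_mul_min_one_edist_of_lipschitzWith hγ hγ0 hγ1 _ _).trans ?_
  gcongr
  rw [edist_dist, edist_dist, ← ENNReal.ofReal_div_of_pos hδ, dist_add_left, Real.dist_eq,
    ← sub_div, _root_.sub_sub_sub_cancel_left, abs_div, abs_of_pos hδ, abs_sub_comm]
  gcongr
  exact abs_dist_sub_le x y x₀

end RadialTransition

section RadialTransitionEnergy

variable {X : Type*} [PseudoEMetricSpace X] {γ : ℝ → X} {K : ℝ≥0} {b b' : X}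
  {E : Type*} [NormedAddCommGroup E] [NormedSpace ℝ E] [FiniteDimensional ℝ E]
  [MeasurableSpace E] [BorelSpace E] (μ : Measure E) [μ.IsAddHaarMeasure]

theorem gagliardoEnergy_radialTransition_univ_le (x₀ : E) {p R δ : ℝ} (hp : 0 < p) (hδ : 0 < δ)
    (hδR : δ ≤ R) (hγ : LipschitzWith K γ) (hγ0 : ∀ t ≤ 0, γ t = b)
    (hγ1 : ∀ t, 1 ≤ t → γ t = b') (hbb' : edist b b' = 0) :
    gagliardoEnergy μ p (finrank ℝ E + 1) (radialTransition γ x₀ R δ) univ ≤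
      2 * (ENNReal.ofReal (finrank ℝ E * (2 * R) ^ (finrank ℝ E - 1)) * μ (ball 0 1) *
        (K ^ p * truncatedKernelIntegral μ p 1)) := by
  set w := radialTransition γ x₀ R δ
  set L := closedBall x₀ (R + δ) \ closedBall x₀ R
  have hR : 0 ≤ R := hδ.le.trans hδR
  have hwL (x : E) (hx : x ∉ L) : w x = b ∨ w x = b' := by
    rcases le_or_gt (dist x x₀) R with hxR | hxR
    · exact .inr (radialTransition_of_dist_le hγ1 hδ.le hxR)
    · refine .inl (radialTransition_of_le_dist hγ0 hδ ?_)
      simp only [L, Set.mem_sdiff, mem_closedBall, not_and, not_not] at hx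
      exact (not_le.1 fun h => hxR.not_ge (hx h)).le
  have hconst : ∀ x ∉ L, ∀ y ∉ L, edist (w x) (w y) = 0 := fun x hx y hy => by
    rcases hwL x hx with h | h <;> rcases hwL y hy with h' | h' <;>
      simp [h, h', hbb', edist_comm b' b]
  have hL : μ L ≤ ENNReal.ofReal δ *
      (ENNReal.ofReal (finrank ℝ E * (2 * R) ^ (finrank ℝ E - 1)) * μ (ball 0 1)) := by
    refine (measure_closedBall_diff_closedBall_le μ x₀ hR hδ.le).trans ?_
    rw [ENNReal.ofReal_mul hδ.le, mul_assoc]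
    have hsum : R + δ ≤ 2 * R := by linarith
    gcongr
  refine (gagliardoEnergy_univ_le μ hp zero_le_one hδ
    (measurableSet_closedBall.diff measurableSet_closedBall)
    (edist_radialTransition_le hγ hγ0 hγ1 hδ) hconst).trans ?_
  rw [ENNReal.rpow_one, ← mul_div_assoc, ← ENNReal.mul_comm_div]
  gcongr
  exact ENNReal.div_le_of_le_mul' hL

theorem eventually_gagliardoEnergy_radialTransition_univ_lt (hE : 2 ≤ finrank ℝ E) (x₀ : E)
    {p : ℝ} (hp : 1 < p) (hγ : LipschitzWith K γ) (hγ0 : ∀ t ≤ 0, γ t = b)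
    (hγ1 : ∀ t, 1 ≤ t → γ t = b') (hbb' : edist b b' = 0) {ε : ℝ≥0∞} (hε : ε ≠ 0) :
    ∀ᶠ R in 𝓝[>] (0 : ℝ), ∀ δ ∈ Ioc 0 R,
      gagliardoEnergy μ p (finrank ℝ E + 1) (radialTransition γ x₀ R δ) univ < ε := by
  have : Nontrivial E := finrank_pos_iff.1 (two_pos.trans_le hE)
  set J := K ^ p * truncatedKernelIntegral μ p 1
  have hJ : J ≠ ∞ := ENNReal.mul_ne_top
    (ENNReal.rpow_ne_top_of_nonneg (by linarith) coe_ne_top)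
    (truncatedKernelIntegral_ne_top μ one_pos hp)
  have hlim : Tendsto (fun R : ℝ => 2 * (ENNReal.ofReal
      (finrank ℝ E * (2 * R) ^ (finrank ℝ E - 1)) * μ (ball 0 1) * J)) (𝓝[>] 0) (𝓝 0) := by
    have hcont : Continuous fun R : ℝ => ENNReal.ofReal
        (finrank ℝ E * (2 * R) ^ (finrank ℝ E - 1)) :=
      ENNReal.continuous_ofReal.comp (by fun_prop)
    have h0 := (hcont.tendsto 0).mono_left (nhdsWithin_le_nhds (s := Ioi 0))
    rw [mul_zero, zero_pow (by lia), mul_zero, ofReal_zero] at h0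
    simpa using ENNReal.Tendsto.const_mul (ENNReal.Tendsto.mul_const
      (ENNReal.Tendsto.mul_const h0 (b := μ (ball 0 1)) (.inr measure_ball_lt_top.ne)) (.inr hJ))
      (.inr ENNReal.ofNat_ne_top) (a := 2)
  filter_upwards [hlim.eventually_lt_const (pos_iff_ne_zero.2 hε)] with R hR δ hδ
  exact (gagliardoEnergy_radialTransition_univ_le μ x₀ (by linarith) hδ.1 hδ.2 hγ hγ0 hγ1
    hbb').trans_lt hR

theorem tendsto_gagliardoEnergy_radialTransition_ball [Nontrivial E] (x₀ : E) {p R r a : ℝ}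
    (hR : 0 < R) (hRr : 4 * R ≤ r) (ha : 1 ≤ a) (hγ0 : ∀ t ≤ 0, γ t = b)
    (hγ1 : ∀ t, 1 ≤ t → γ t = b') (hbb' : edist b b' ≠ 0) (hbb'_top : edist b b' ≠ ∞) :
    Tendsto (fun δ => gagliardoEnergy μ p (finrank ℝ E + a) (radialTransition γ x₀ R δ)
      (ball x₀ r)) (𝓝[>] 0) (𝓝 ∞) := by
  rw [edist_comm] at hbb' hbb'_top
  have hjump : edist b' b ^ p ≠ 0 := by simp [ENNReal.rpow_eq_zero_iff, hbb', hbb'_top]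
  have hjump_top : edist b' b ^ p ≠ ∞ := by simp [ENNReal.rpow_eq_top_iff, hbb', hbb'_top]
  have hlim := ENNReal.Tendsto.const_mul (a := edist b' b ^ p)
    (tendsto_lintegral_ball_shell_edist_rpow_inv μ x₀ hR hRr ha) (.inl ENNReal.top_ne_zero)
  rw [ENNReal.mul_top hjump] at hlim
  refine tendsto_nhds_top_mono hlim (eventually_nhdsWithin_of_forall fun δ (hδ : 0 < δ) => ?_)
  exact edist_rpow_mul_lintegral_le_gagliardoEnergy (closedBall_subset_ball (by linarith))
    sdiff_subset measurableSet_closedBall (measurableSet_ball.diff measurableSet_ball)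
    (fun x hx => radialTransition_of_dist_le hγ1 hδ.le hx)
    (fun y hy => radialTransition_of_le_dist hγ0 hδ (not_lt.1 hy.2)) hjump_top

theorem analytical_singularity_basic_ingredient_general (hE : 2 ≤ finrank ℝ E) {p : ℝ}
    (hp : 1 < p) {Y : Type*} [PseudoEMetricSpace Y] {π : X → Y} {C : ℝ≥0}
    (hπ : LipschitzWith C π) (hγ : LipschitzWith K γ) (hγ0 : ∀ t ≤ 0, γ t = b)
    (hγ1 : ∀ t, 1 ≤ t → γ t = b') (hbb' : edist b b' ≠ 0) (hπb : edist (π b) (π b') = 0)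
    {r : ℝ} (hr : 0 < r) (x₀ : E) {ε M : ℝ≥0∞} (hε : ε ≠ 0) (hM : M ≠ ∞) :
    ∃ u : E → X, Continuous u ∧ (∀ x, r ≤ dist x x₀ → u x = b) ∧
      (∃ U, IsOpen U ∧ x₀ ∈ U ∧ ∀ x ∈ U, u x = b') ∧
      M < gagliardoEnergy μ p (finrank ℝ E + 1) u (ball x₀ r) ∧
      gagliardoEnergy μ p (finrank ℝ E + 1) (π ∘ u) univ < ε := by
  have : Nontrivial E := finrank_pos_iff.1 (two_pos.trans_le hE)
  have hbb'_top : edist b b' ≠ ∞ := by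
    simpa only [hγ0 0 le_rfl, hγ1 1 le_rfl] using (hγ.edist_lt_top (edist_ne_top 0 1)).ne
  have hlt := eventually_gagliardoEnergy_radialTransition_univ_lt μ hE x₀ hp (hπ.comp hγ)
    (fun t ht => congrArg π (hγ0 t ht)) (fun t ht => congrArg π (hγ1 t ht)) hπb hε
  obtain ⟨R, hsmall, hR, hRr⟩ :=
    (hlt.and (Ioo_mem_nhdsGT (by positivity : 0 < r / 4))).exists
  have htop := tendsto_gagliardoEnergy_radialTransition_ball μ x₀ (p := p) hR
    (by linarith : 4 * R ≤ r) le_rfl hγ0 hγ1 hbb' hbb'_top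
  obtain ⟨δ, hlarge, hδ⟩ :=
    ((htop.eventually_const_lt hM.lt_top).and (Ioc_mem_nhdsGT hR)).exists
  exact ⟨radialTransition γ x₀ R δ, continuous_radialTransition hγ.continuous,
    fun x hx => radialTransition_of_le_dist hγ0 hδ.1 (by linarith [hδ.2]),
    ⟨ball x₀ R, isOpen_ball, mem_ball_self hR,
      fun x hx => radialTransition_of_dist_le hγ1 hδ.1.le (mem_ball.1 hx).le⟩,
    hlarge, hsmall δ hδ⟩

end RadialTransitionEnergy

/-- **The basic ingredient for the analytical obstruction.** Let `m ≥ 2`, `0 < s < 1`,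
`p = 1/s`. Let `π : Ñ → N` between metric spaces be nonexpansive and an isometry at scale
`ρ > 0`, and let `b̃ ≠ b̃'` with `π(b̃) = π(b̃')` be joined by a Lipschitz path constantly
`b̃` near `-∞` and `b̃'` near `+∞`. Then for all `r > 0`, `x₀`, `ε > 0`, `M > 0` there is a
continuous `ũ : ℝ^m → Ñ`, equal to `b̃` outside `B_r(x₀)` and to `b̃'` near `x₀`, whose
`W^{s,p}` seminorm on `B_r(x₀)` exceeds `M` while the seminorm of `π ∘ ũ` on `ℝ^m` is less
than `ε`. -/
theorem analytical_singularity_basic_ingredient (s p : ℝ) (m : ℕ) (hm : 2 ≤ m)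
    (hs0 : 0 < s) (hs1 : s < 1) (hp : p = 1 / s)
    {Ntl N : Type*} [MetricSpace Ntl] [MetricSpace N]
    (π : Ntl → N) (ρ : ℝ) (hρ : 0 < ρ)
    (hnonexp : ∀ a b : Ntl, dist (π a) (π b) ≤ dist a b)
    (hiso : ∀ a b : Ntl, dist a b ≤ ρ → dist (π a) (π b) = dist a b)
    (bt bt' : Ntl) (hbne : bt ≠ bt') (hbπ : π bt = π bt')
    (γ : ℝ → Ntl) (K : NNReal) (hγ : LipschitzWith K γ)
    (hγ0 : ∀ t : ℝ, t ≤ 0 → γ t = bt) (hγ1 : ∀ t : ℝ, 1 ≤ t → γ t = bt')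
    (r : ℝ) (hr : 0 < r) (x₀ : EuclideanSpace ℝ (Fin m)) (ε : ℝ) (hε : 0 < ε)
    (M : ℝ) (hM : 0 < M) :
    ∃ ut : EuclideanSpace ℝ (Fin m) → Ntl, Continuous ut ∧
      (∀ x, r ≤ dist x x₀ → ut x = bt) ∧
      (∃ U : Set (EuclideanSpace ℝ (Fin m)), IsOpen U ∧ x₀ ∈ U ∧ ∀ x ∈ U, ut x = bt') ∧
      ENNReal.ofReal M <
        (∫⁻ x in ball x₀ r, ∫⁻ y in ball x₀ r,
          edist (ut x) (ut y) ^ p / edist x y ^ ((m : ℝ) + 1)) ∧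
      (∫⁻ x : EuclideanSpace ℝ (Fin m), ∫⁻ y : EuclideanSpace ℝ (Fin m),
          edist (π (ut x)) (π (ut y)) ^ p / edist x y ^ ((m : ℝ) + 1)) <
        ENNReal.ofReal ε := by
  simpa [gagliardoEnergy] using analytical_singularity_basic_ingredient_general
    (volume : Measure (EuclideanSpace ℝ (Fin m))) (by simpa) (by rw [hp, one_lt_div hs0]; exact hs1)
    (.mk_one hnonexp) hγ hγ0 hγ1 (edist_pos.2 hbne).ne' (by simp [hbπ]) hr x₀
    (ENNReal.ofReal_pos.2 hε).ne' (ENNReal.ofReal_ne_top (r := M))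
end
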